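/- arXiv:1712.07338 — 8 statements merged into one kernel-verified Lean document; each statement's English description precedes it below -/
import Mathlib

section
/- Let n > 1 be an integer, and let a and b be odd integers satisfying gcd(a, b) = 1, a ≡ 1 (mod 3), and b ≡ 0 (mod 3). Then 3 divides the class number of the quadratic field ℚ(√(3(4a^{3n} − b^{2n}))). -/
open NumberField

theorem h94_group {E F A B : Type*} [CommGroup E] [CommGroup F] [Fintype A] [Fintype B]
    (ι : F →* E) (σ : E →* E) (hσι : ∀ v, σ (ι v) = ι v)
    (hN : ∀ e, ∃ v, ι v = e * σ e * σ (σ e))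
    (h : ∀ e, e * σ e * σ (σ e) = 1 → ∃ u, e = u / σ u)
    (rep : A → F) (hrep : ∀ v, ∃ a w, v = rep a * w ^ 3)
    (φ : E → B) (hφ : ∀ e w, φ (e * w ^ 3) = φ e) (hsurj : Function.Surjective φ) :
    Fintype.card B ≤ Fintype.card A ^ 3 := by
  classical
  -- choose sections
  have ht : ∀ a : A, ∃ t : E, (∃ e w, e * σ e * σ (σ e) = ι (rep a * w ^ 3)) →
      ∃ w, t * σ t * σ (σ t) = ι (rep a * w ^ 3) := by
    intro a
    by_cases H : ∃ e w, e * σ e * σ (σ e) = ι (rep a * w ^ 3)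
    · obtain ⟨e, w, hw⟩ := H
      exact ⟨e, fun _ => ⟨w, hw⟩⟩
    · exact ⟨1, fun H' => absurd H' H⟩
  choose t ht using ht
  have key : ∀ e, ∃ a v u, e = t a * ι v * (u / σ u) := by
    intro e
    obtain ⟨v, hv⟩ := hN e
    obtain ⟨a, w, rfl⟩ := hrep v
    obtain ⟨w', hw'⟩ := ht a ⟨e, w, hv.symm⟩
    obtain ⟨u, hu⟩ := h (e / (t a * ι (w / w'))) (by
      simp only [map_div, map_mul, hσι]
      have h1 : e * σ e * σ (σ e) = (t a * σ (t a) * σ (σ (t a))) * ι (w / w') ^ 3 := by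
        rw [hw', ← hv, ← map_pow, ← map_mul]
        congr 1
        rw [div_pow, mul_assoc, mul_div_cancel]
      rw [div_mul_div_comm, div_mul_div_comm, div_eq_one, h1]
      simp only [map_div, pow_succ, pow_zero, one_mul]
      ac_rfl)
    exact ⟨a, w / w', u, by rw [← hu, mul_div_cancel]⟩
  let g : A × A × A → B := fun x => φ (t x.1 * (t x.2.1 / σ (t x.2.1)) * ι (rep x.2.2))
  have hg : Function.Surjective g := by
    intro b
    obtain ⟨e, rfl⟩ := hsurj b
    obtain ⟨a, v, e1, he⟩ := key e
    obtain ⟨a1, v1, e2, he1⟩ := key e1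
    obtain ⟨v2, hv2⟩ := hN e2
    obtain ⟨a2, w, hw⟩ := hrep (v * v2)
    refine ⟨(a, a1, a2), ?_⟩
    have : e = t a * (t a1 / σ (t a1)) * ι (rep a2) * (ι w / σ e2) ^ 3 := by
      have h2 : ι (rep a2) * ι w ^ 3 = ι v * (e2 * σ e2 * σ (σ e2)) := by
        rw [← hv2, ← map_mul, hw, map_mul, map_pow]
      rw [div_pow, ← mul_div_assoc, mul_assoc _ (ι (rep a2)), h2, he, he1]
      simp only [map_div, map_mul, hσι]
      apply Additive.ofMul.injective
      simp only [ofMul_mul, ofMul_div, ofMul_pow]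
      abel
    conv_rhs => rw [this]
    exact (hφ _ _).symm
  calc Fintype.card B ≤ Fintype.card (A × A × A) := Fintype.card_le_of_surjective g hg
    _ = _ := by simp only [Fintype.card_prod]; ring

theorem h94_rep (K : Type*) [Field K] [NumberField K]
    (hμ : ∀ z : K, z ^ 2 + z + 1 ≠ 0) :
    ∃ rep : (Fin (Units.rank K) → Fin 3) → (𝓞 K)ˣ, ∀ v, ∃ a w, v = rep a * w ^ 3 := by
  have hinj : Function.Injective (fun z : Units.torsion K => z ^ 3) := by
    have : Function.Injective (powMonoidHom 3 : Units.torsion K →* Units.torsion K) := by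
      rw [injective_iff_map_eq_one]
      intro z hz
      by_contra hne
      have hz3 : ((z : (𝓞 K)ˣ) : K) ^ 3 = 1 := by
        have := congrArg (fun y : Units.torsion K => (((y : (𝓞 K)ˣ) : 𝓞 K) : K)) hz
        simpa using this
      have hz1 : ((z : (𝓞 K)ˣ) : K) ≠ 1 := by
        intro h
        apply hne
        ext
        simpa using h
      apply hμ ((z : (𝓞 K)ˣ) : K)
      have : (((z : (𝓞 K)ˣ) : K) - 1) * (((z : (𝓞 K)ˣ) : K) ^ 2 + ((z : (𝓞 K)ˣ) : K) + 1) = 0 := by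
        linear_combination hz3
      exact (mul_eq_zero.1 this).resolve_left (sub_ne_zero.2 hz1)
    exact this
  have hsurj := Finite.surjective_of_injective hinj
  refine ⟨fun a => ∏ i, Units.fundSystem K i ^ ((a i : ℕ) : ℤ), fun v => ?_⟩
  obtain ⟨⟨ζ, e⟩, he, -⟩ := Units.exist_unique_eq_mul_prod K v
  obtain ⟨ξ, hξ⟩ := hsurj ζ
  refine ⟨fun i => ⟨(e i % 3).toNat, by omega⟩,
    (ξ : (𝓞 K)ˣ) * ∏ i, Units.fundSystem K i ^ (e i / 3), ?_⟩
  simp only at he hξ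
  rw [he, ← hξ, mul_pow, ← Finset.prod_pow, mul_left_comm, ← Finset.prod_mul_distrib]
  congr 1
  refine Finset.prod_congr rfl fun i _ => ?_
  rw [← zpow_natCast, ← zpow_mul, ← zpow_add]
  congr 1
  simp only
  omega

theorem h94_phi (L : Type*) [Field L] [NumberField L] :
    ∃ φ : (𝓞 L)ˣ → (Fin (Units.rank L) → ZMod 3),
      (∀ e w, φ (e * w ^ 3) = φ e) ∧ Function.Surjective φ := by
  choose d hd hu using Units.exist_unique_eq_mul_prod L
  refine ⟨fun u i => ((d u).2 i : ZMod 3), ?_, ?_⟩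
  · intro e w
    have := hu (e * w ^ 3) ((d e).1 * (d w).1 ^ 3, fun i => (d e).2 i + 3 * (d w).2 i) (by
      have h1 := hd e
      have h2 := hd w
      simp only at h1 h2 ⊢
      conv_lhs => rw [h1, h2]
      rw [mul_pow, ← Finset.prod_pow, mul_mul_mul_comm, ← Finset.prod_mul_distrib]
      push_cast
      congr 1
      refine Finset.prod_congr rfl fun i _ => ?_
      rw [zpow_add, mul_comm 3, zpow_mul]
      rfl)
    funext i
    simp only
    rw [← this]
    push_cast
    have : (3 : ZMod 3) = 0 := rfl
    simp [this]
  · intro y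
    refine ⟨∏ i, Units.fundSystem L i ^ ((y i).val : ℤ), ?_⟩
    have := hu (∏ i, Units.fundSystem L i ^ ((y i).val : ℤ)) (1, fun i => ((y i).val : ℤ)) (by simp)
    funext i
    simp only
    rw [← this]
    simp

theorem h94_mem {R : Type*} [CommRing R] (s : R → R) (hJ : Ideal.span (Set.range fun y => s y - y) = ⊤)
    (I' : Ideal R) (x : R) (h : ∀ y, (s y - y) * x ∈ I') : x ∈ I' := by
  have : Ideal.span (Set.range fun y => s y - y) ≤
      Submodule.comap (LinearMap.toSpanSingleton R R x) I' := by
    rw [Ideal.span_le]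
    rintro _ ⟨y, rfl⟩
    simpa using h y
  have h1 : (1 : R) ∈ Submodule.comap (LinearMap.toSpanSingleton R R x) I' := by
    apply this
    rw [hJ]
    trivial
  simpa using h1

theorem h94_descent {R S : Type*} [CommRing R] [CommRing S] [Algebra S R] (s : R →+* R)
    (hs3 : ∀ x, s (s (s x)) = x)
    (hfix : ∀ x, s x = x → ∃ y : S, algebraMap S R y = x)
    (hJ : Ideal.span (Set.range fun y => s y - y) = ⊤)
    (I : Ideal R) (hI : ∀ x ∈ I, s x ∈ I) : (I.comap (algebraMap S R)).map (algebraMap S R) = I := by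
  apply le_antisymm Ideal.map_comap_le
  intro z hz
  set I' := (I.comap (algebraMap S R)).map (algebraMap S R)
  have hT : ∀ x ∈ I, x + s x + s (s x) ∈ I' := by
    intro x hx
    obtain ⟨y, hy⟩ := hfix (x + s x + s (s x)) (by simp only [map_add, hs3]; ring)
    rw [← hy]
    apply Ideal.mem_map_of_mem
    rw [Ideal.mem_comap, hy]
    exact I.add_mem (I.add_mem hx (hI _ hx)) (hI _ (hI _ hx))
  have h1 : ∀ y, ∀ z ∈ I, (s y - y) * z + (s y - s (s y)) * s (s z) ∈ I' := by
    intro y z hz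
    have e1 := I'.mul_mem_left (s y) (hT z hz)
    have e2 := hT (y * z) (I.mul_mem_left y hz)
    have := I'.sub_mem e1 e2
    convert this using 1
    simp only [map_mul]
    ring
  apply h94_mem s hJ
  intro y
  apply h94_mem s hJ
  intro w
  have e1 := h1 y (s w * z) (I.mul_mem_left _ hz)
  have e2 := I'.mul_mem_left w (h1 y z hz)
  convert I'.sub_mem e1 e2 using 1
  simp only [map_mul, hs3]
  ring

open scoped nonZeroDivisors in
theorem h94_principal {R : Type*} [CommRing R] [IsDedekindDomain R] [Fintype (ClassGroup R)]
    (h3 : ¬ 3 ∣ Fintype.card (ClassGroup R)) (I : Ideal R) (hI : I ≠ ⊥)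
    (h : (I ^ 3).IsPrincipal) : I.IsPrincipal := by
  have h0 : I ∈ (Ideal R)⁰ := mem_nonZeroDivisors_of_ne_zero hI
  have h1 : ClassGroup.mk0 ⟨I, h0⟩ ^ 3 = 1 := by
    rw [← map_pow, ClassGroup.mk0_eq_one_iff]
    exact h
  have h2 : ClassGroup.mk0 ⟨I, h0⟩ = 1 := by
    by_contra hne
    have : Fact (Nat.Prime 3) := ⟨Nat.prime_three⟩
    exact h3 (orderOf_eq_prime h1 hne ▸ orderOf_dvd_card)
  exact (ClassGroup.mk0_eq_one_iff h0).1 h2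

theorem h94 {K L : Type*} [Field K] [NumberField K] [Field L] [NumberField L] [Algebra K L]
    [IsGalois K L] (hdeg : Module.finrank K L = 3) (hμ : ∀ z : K, z ^ 2 + z + 1 ≠ 0)
    (σ : L ≃ₐ[K] L) (hσ3 : ∀ x, σ (σ (σ x)) = x)
    (hfix : ∀ x, σ x = x → ∃ y : K, algebraMap K L y = x)
    (t : L) (ht1 : t ≠ σ t) (ht2 : t ≠ σ (σ t))
    (s : 𝓞 L →+* 𝓞 L) (hs : ∀ x, ((s x : 𝓞 L) : L) = σ x)
    (hJ : Ideal.span (Set.range fun y => s y - y) = ⊤) :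
    3 ∣ classNumber K := by
  by_contra hcl
  have hs3 : ∀ x, s (s (s x)) = x := by
    intro x
    ext
    simp only [hs, hσ3]
  have hfix' : ∀ x, s x = x → ∃ y : 𝓞 K, algebraMap (𝓞 K) (𝓞 L) y = x := by
    intro x hx
    obtain ⟨y, hy⟩ := hfix (x : L) (by rw [← hs, hx])
    have hyi : IsIntegral ℤ y := by
      rw [← isIntegral_algebraMap_iff (algebraMap K L).injective, hy]
      exact RingOfIntegers.isIntegral_coe x
    refine ⟨⟨y, hyi⟩, ?_⟩
    ext
    exact hy
  have hinj : Function.Injective (algebraMap (𝓞 K) (𝓞 L)) := FaithfulSMul.algebraMap_injective _ _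
  let ι : (𝓞 K)ˣ →* (𝓞 L)ˣ := Units.map (algebraMap (𝓞 K) (𝓞 L) : 𝓞 K →* 𝓞 L)
  let τ : (𝓞 L)ˣ →* (𝓞 L)ˣ := Units.map (s : 𝓞 L →* 𝓞 L)
  have hsK : ∀ y : 𝓞 K, s (algebraMap (𝓞 K) (𝓞 L) y) = algebraMap (𝓞 K) (𝓞 L) y := by
    intro y
    ext
    rw [hs]
    exact σ.commutes (y : K)
  have hfixu : ∀ e : (𝓞 L)ˣ, τ e = e → ∃ v, ι v = e := by
    intro e he
    obtain ⟨y, hy⟩ := hfix' (e : 𝓞 L) (by simpa [τ] using congrArg Units.val he)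
    obtain ⟨y', hy'⟩ := hfix' ((e⁻¹ : (𝓞 L)ˣ) : 𝓞 L) (by
      have : τ e⁻¹ = e⁻¹ := by rw [map_inv, he]
      simpa [τ] using congrArg Units.val this)
    have h1 : y * y' = 1 := hinj (by rw [map_mul, hy, hy', map_one]; simp)
    exact ⟨⟨y, y', h1, by rw [mul_comm, h1]⟩, by ext; exact congrArg _ hy⟩
  obtain ⟨rep, hrep⟩ := h94_rep K hμ
  obtain ⟨φ, hφ, hφs⟩ := h94_phi L
  have hτ3 : ∀ e, τ (τ (τ e)) = e := by
    intro e
    apply Units.ext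
    exact hs3 _
  have hcard := h94_group ι τ (by intro v; apply Units.ext; exact hsK _)
    (by
      intro e
      apply hfixu
      simp only [map_mul, hτ3]
      rw [mul_comm, mul_assoc])
    (by
      intro e he
      -- Hilbert 90
      have hN : (e : L) * σ e * σ (σ e) = 1 := by
        have := congrArg (fun x : (𝓞 L)ˣ => ((x : 𝓞 L) : L)) he
        simpa [τ, hs] using this
      obtain ⟨β, hβ0, hβ⟩ : ∃ β : L, β ≠ 0 ∧ (e : L) * σ β = β := by
        by_contra! H
        have H' : ∀ x : L, x + e * σ x + e * σ e * σ (σ x) = 0 := by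
          intro x
          by_contra hne
          refine H _ hne ?_
          simp only [map_add, map_mul, hσ3]
          linear_combination x * hN
        have E0 := H' 1
        have E1 := H' t
        have E2 := H' (t ^ 2)
        simp only [map_one, map_pow] at E0 E1 E2
        have : (t - σ t) * (t - σ (σ t)) = 0 := by
          linear_combination E2 - (σ t + σ (σ t)) * E1 + σ t * σ (σ t) * E0
        rcases mul_eq_zero.1 this with h | h
        · exact ht1 (sub_eq_zero.1 h)
        · exact ht2 (sub_eq_zero.1 h)
      obtain ⟨α, hα0, hα⟩ : ∃ α : 𝓞 L, α ≠ 0 ∧ (e : 𝓞 L) * s α = α := by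
        obtain ⟨x, y, hy, rfl⟩ := IsFractionRing.div_surjective (A := 𝓞 L) β
        -- multiply by the norm of the denominator
        have hy0 : y ≠ 0 := nonZeroDivisors.ne_zero hy
        have hyL : (y : L) ≠ 0 := by simpa using hy0
        have hsy : σ (y : L) ≠ 0 := by simpa using hy0
        have hssy : σ (σ (y : L)) ≠ 0 := by simpa using hy0
        have hx0 : x ≠ 0 := by
          rintro rfl
          simp at hβ0
        refine ⟨x * s y * s (s y), ?_, ?_⟩
        · refine mul_ne_zero (mul_ne_zero hx0 ?_) ?_
          · intro h; apply hsy; rw [← hs, h]; simp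
          · intro h; apply hssy; rw [← hs, ← hs, h]; simp
        · ext
          simp only [map_mul, hs, hσ3]
          change (e : L) * (σ x * σ (σ y) * y) = x * σ y * σ (σ y)
          change (e : L) * σ ((x : L) / y) = x / y at hβ
          rw [map_div₀] at hβ
          field_simp at hβ
          linear_combination (σ (σ (y : L))) * hβ
      set I : Ideal (𝓞 L) := Ideal.span {α} with hIdef
      have hIs : ∀ x ∈ I, s x ∈ I := by
        intro x hx
        obtain ⟨c, rfl⟩ := Ideal.mem_span_singleton.1 hx
        rw [map_mul, Ideal.mem_span_singleton]
        refine Dvd.dvd.mul_right ⟨((e⁻¹ : (𝓞 L)ˣ) : 𝓞 L), ?_⟩ _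
        conv_rhs => rw [← hα]
        rw [mul_right_comm, Units.mul_inv, one_mul]
      have hdesc := h94_descent s hs3 hfix' hJ I hIs
      set P := I.comap (algebraMap (𝓞 K) (𝓞 L)) with hP
      have hP0 : P ≠ ⊥ := by
        intro h
        rw [h, Ideal.map_bot] at hdesc
        exact hα0 (Ideal.span_singleton_eq_bot.1 hdesc.symm)
      have hP3 : (P ^ 3).IsPrincipal := by
        have h1 := Ideal.relNorm_algebraMap (R := 𝓞 K) (𝓞 L) P
        rw [hdesc, hIdef, Ideal.relNorm_singleton] at h1
        have h2 : Module.finrank (𝓞 K) (𝓞 L) = 3 := by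
          rw [← hdeg]
          exact (IsFractionRing.finrank_eq (𝓞 K) K (𝓞 L) L).symm
        rw [h2] at h1
        rw [← h1]
        exact ⟨_, rfl⟩
      obtain ⟨p, hp⟩ := h94_principal hcl P hP0 hP3
      have hp' : P = Ideal.span {p} := hp
      rw [hp', Ideal.map_span, Set.image_singleton, hIdef, Ideal.span_singleton_eq_span_singleton] at hdesc
      obtain ⟨u, hu⟩ := hdesc
      refine ⟨u, ?_⟩
      rw [eq_div_iff_mul_eq']
      apply Units.ext
      have hp0 : algebraMap (𝓞 K) (𝓞 L) p ≠ 0 := by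
        intro h
        rw [h, zero_mul] at hu
        exact hα0 hu.symm
      apply mul_left_cancel₀ hp0
      change _ * ((e : 𝓞 L) * s (u : 𝓞 L)) = _
      rw [hu, ← hα, ← hu, map_mul, hsK]
      ring)
    rep hrep φ hφ hφs
  have hunr : IsUnramifiedAtInfinitePlaces K L :=
    IsUnramifiedAtInfinitePlaces_of_odd_finrank (by rw [hdeg]; decide)
  have hpl := IsUnramifiedAtInfinitePlaces.card_infinitePlace K L
  rw [hdeg] at hpl
  have hpos : 0 < Fintype.card (InfinitePlace K) := Fintype.card_pos
  simp only [Fintype.card_fun, Fintype.card_fin, ZMod.card, ← pow_mul] at hcard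
  have := (Nat.pow_le_pow_iff_right (by norm_num)).1 hcard
  unfold Units.rank at this
  omega

open Polynomial in
theorem h94_noroot (A B : ℤ) (hA : Odd A) (hB : Odd B) (K : Type*) [Field K] [NumberField K]
    (hdeg : Module.finrank ℚ K = 2) (β : K) : β ^ 3 - 3 * (A : K) * β + (B : K) ≠ 0 := by
  intro hβ
  let g : ℤ[X] := X ^ 3 + (C (-3 * A) * X + C B)
  have hgd : (C (-3 * A) * X + C B : ℤ[X]).degree < ((3 : ℕ) : WithBot ℕ) :=
    lt_of_le_of_lt degree_linear_le (by norm_num)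
  have hgm : g.Monic := monic_X_pow_add (n := 3) hgd
  have hgn : g.natDegree = 3 := by simp only [g]; compute_degree!
  let f : ℚ[X] := g.map (Int.castRingHom ℚ)
  have hfm : f.Monic := hgm.map _
  have hfn : f.natDegree = 3 := by rw [hgm.natDegree_map, hgn]
  have hirr : Irreducible f := by
    rw [hfm.irreducible_iff_roots_eq_zero_of_degree_le_three (by omega) (by omega),
      Multiset.eq_zero_iff_forall_notMem]
    intro r hr
    rw [mem_roots hfm.ne_zero, IsRoot.def, eval_map] at hr
    have hint : IsIntegral ℤ r := ⟨g, hgm, hr⟩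
    obtain ⟨k, rfl⟩ := IsIntegrallyClosed.isIntegral_iff.1 hint
    have hk : k ^ 3 - 3 * A * k + B = 0 := by
      simp [g] at hr
      have : ((k ^ 3 - 3 * A * k + B : ℤ) : ℚ) = 0 := by
        push_cast
        linear_combination hr
      exact_mod_cast this
    rcases Int.even_or_odd k with h | h
    · have : Odd (k ^ 3 - 3 * A * k + B) := by
        have h1 : Even (k ^ 3 - 3 * A * k) := by
          apply Even.sub
          · exact h.pow_of_ne_zero (by norm_num)
          · exact h.mul_left _
        exact h1.add_odd hB
      rw [hk] at this
      exact absurd this (by decide)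
    · have : Odd (k ^ 3 - 3 * A * k + B) := by
        have h1 : Even (k ^ 3 - 3 * A * k) := by
          apply Odd.sub_odd h.pow
          exact (Odd.mul (by decide) hA).mul h
        exact h1.add_odd hB
      rw [hk] at this
      exact absurd this (by decide)
  have h1 : f = minpoly ℚ β := by
    apply minpoly.eq_of_irreducible_of_monic hirr _ hfm
    rw [aeval_def, eval₂_map]
    simp only [g, eval₂_add, eval₂_mul, eval₂_C, eval₂_X, eval₂_X_pow]
    simp only [eq_intCast]
    push_cast
    linear_combination hβ
  have h2 := minpoly.natDegree_le (A := ℚ) β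
  rw [← h1, hfn, hdeg] at h2
  omega

theorem h94_mu (m : ℤ) (hm : m % 3 = 1) (K : Type*) [Field K] [NumberField K]
    (hdeg : Module.finrank ℚ K = 2) (s : K) (hs : s ^ 2 = 3 * (m : K)) (z : K) :
    z ^ 2 + z + 1 ≠ 0 := by
  intro hz
  have hm0 : m ≠ 0 := by rintro rfl; simp at hm
  have hirr : ∀ r : ℚ, (algebraMap ℚ K r) ≠ s := by
    rintro r rfl
    have h1 : r ^ 2 = ((3 * m : ℤ) : ℚ) := by
      apply (algebraMap ℚ K).injective
      rw [map_pow, hs]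
      simp
    have h2 : IsSquare ((3 * m : ℤ) : ℚ) := ⟨r, by rw [← h1, sq]⟩
    rw [Rat.isSquare_intCast_iff] at h2
    obtain ⟨k, hk⟩ := h2
    have h3 : (3 : ℤ) ∣ k := by
      have : (3 : ℤ) ∣ k * k := ⟨m, hk.symm⟩
      rcases Int.prime_three.dvd_or_dvd this with h | h <;> exact h
    obtain ⟨j, rfl⟩ := h3
    have : m = 3 * (j * j) := by linarith
    omega
  have hli : LinearIndependent ℚ ![(1 : K), s] := by
    rw [LinearIndependent.pair_iff]
    intro x y hxy
    have hy : y = 0 := by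
      by_contra hy
      apply hirr (-x / y)
      have hy' : (algebraMap ℚ K y) ≠ 0 := by simpa using hy
      rw [map_div₀, map_neg, div_eq_iff hy']
      rw [Algebra.smul_def, Algebra.smul_def] at hxy
      linear_combination -hxy
    subst hy
    simp at hxy
    exact ⟨hxy, rfl⟩
  have hspan := hli.span_eq_top_of_card_eq_finrank (by simp [hdeg])
  have hw : (2 * z + 1) ∈ Submodule.span ℚ (Set.range ![(1 : K), s]) := by rw [hspan]; trivial
  simp only [Matrix.range_cons, Matrix.range_empty, Set.union_empty, Set.singleton_union] at hw
  rw [Submodule.mem_span_pair] at hw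
  obtain ⟨x, y, hxy⟩ := hw
  rw [Algebra.smul_def, Algebra.smul_def, mul_one] at hxy
  have hsq : (algebraMap ℚ K x + algebraMap ℚ K y * s) ^ 2 = -3 := by
    rw [hxy]; linear_combination 4 * hz
  have h0 : algebraMap ℚ K (x ^ 2 + 3 * m * y ^ 2 + 3) + algebraMap ℚ K (2 * x * y) * s = 0 := by
    simp only [map_add, map_mul, map_pow, map_ofNat, map_intCast]
    linear_combination hsq - (algebraMap ℚ K y) ^ 2 * hs
  have h1 : 2 * x * y = 0 := by
    by_contra hne
    have hne' : algebraMap ℚ K (2 * x * y) ≠ 0 := by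
      rw [Ne, map_eq_zero]; exact hne
    apply hirr (-(x ^ 2 + 3 * m * y ^ 2 + 3) / (2 * x * y))
    rw [map_div₀, map_neg, div_eq_iff hne']
    linear_combination -h0
  rw [h1, map_zero, zero_mul, add_zero, map_eq_zero] at h0
  have h2 : x = 0 ∨ y = 0 := by
    rcases mul_eq_zero.1 h1 with h | h
    · left; linarith
    · right; exact h
  rcases h2 with rfl | rfl
  · have hy : y ≠ 0 := by rintro rfl; norm_num at h0
    have h3 : IsSquare ((-m : ℤ) : ℚ) := by
      refine ⟨1 / y, ?_⟩
      push_cast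
      field_simp
      linarith
    rw [Rat.isSquare_intCast_iff] at h3
    obtain ⟨k, hk⟩ := h3
    have h4 : (-m) % 3 = 2 := by omega
    rw [hk, Int.mul_emod] at h4
    have : k % 3 = 0 ∨ k % 3 = 1 ∨ k % 3 = 2 := by omega
    rcases this with h | h | h <;> rw [h] at h4 <;> norm_num at h4
  · nlinarith [sq_nonneg x]

theorem h94_orbit {R S : Type*} [CommRing R] [CommRing S] (q : R →+* S) (x y z : R)
    (hxy : q y = q x) (hyz : q z = q y) (c p : ℤ) (h1 : x + y + z = 0)
    (h2 : x * y + x * z + y * z = c) (h3 : x * y * z = p) : (c : S) = 0 ∧ 3 * (p : S) = 0 := by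
  have e1 := congrArg q h1
  have e2 := congrArg q h2
  have e3 := congrArg q h3
  simp only [map_add, map_mul, map_zero, map_intCast, hyz, hxy] at e1 e2 e3
  constructor
  · linear_combination q x * e1 - e2
  · linear_combination q x ^ 2 * e1 - 3 * e3

open Polynomial in
theorem h94_cubic (A B B' m : ℤ) (hA : Odd A) (hB : Odd B) (hAB : IsCoprime A B)
    (hA3 : A % 3 = 1) (hB9 : B = 9 * B') (hm : m = 4 * A ^ 3 - B ^ 2)
    {K L : Type*} [Field K] [NumberField K] [Field L] [NumberField L] [Algebra K L]
    (hdeg : Module.finrank ℚ K = 2) (s : K) (hs : s ^ 2 = 3 * (m : K))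
    (hdeg3 : Module.finrank K L = 3) (θ : L) (hθ : θ ^ 3 - 3 * (A : L) * θ + (B : L) = 0)
    (hgen : Algebra.adjoin K {θ} = ⊤) (f : K[X]) (hf : Irreducible f)
    (hfL : f.map (algebraMap K L) = X ^ 3 - C (3 * (A : L)) * X + C (B : L)) :
    3 ∣ classNumber K := by
  have hm3 : m % 3 = 1 := by
    obtain ⟨k, hk⟩ : ∃ k, A = 3 * k + 1 := ⟨A / 3, by omega⟩
    have : m = 3 * (36 * k ^ 3 + 36 * k ^ 2 + 12 * k + 1 - 27 * B' ^ 2) + 1 := by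
      rw [hm, hB9, hk]; ring
    omega
  have hμ := h94_mu m hm3 K hdeg s hs
  have hA0 : (A : L) ≠ 0 := by
    intro h
    have : A = 0 := by exact_mod_cast h
    rw [this] at hA3
    norm_num at hA3
  have hsL : (algebraMap K L s) ^ 2 = 3 * (m : L) := by
    rw [← map_pow, hs, map_mul, map_ofNat, map_intCast]
  have hmL : (m : L) = 4 * (A : L) ^ 3 - (B : L) ^ 2 := by rw [hm]; push_cast; ring
  have hd : θ ^ 2 - (A : L) ≠ 0 := by
    intro h
    apply h94_noroot A B hA hB K hdeg ((B : K) / (2 * A))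
    apply (algebraMap K L).injective
    have : algebraMap K L ((B : K) / (2 * A)) = θ := by
      rw [map_div₀, map_mul, map_intCast, map_intCast, map_ofNat, div_eq_iff (by simpa using hA0)]
      linear_combination hθ - θ * h
    simp only [map_add, map_sub, map_mul, map_pow, map_zero, map_intCast, map_ofNat, this]
    exact hθ
  have hgal : IsGalois K L := by
    set δ : L := algebraMap K L s / (θ ^ 2 - A) with hδ
    have hδ2 : δ ^ 2 = 12 * A - 3 * θ ^ 2 := by
      rw [hδ, div_pow, hsL, hmL, div_eq_iff (pow_ne_zero 2 hd)]
      have hB' : (B : L) = 3 * A * θ - θ ^ 3 := by linear_combination hθ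
      rw [hB']
      ring
    have hfac : f.map (algebraMap K L) =
        (X - C θ) * (X - C ((-θ + δ) / 2)) * (X - C ((-θ - δ) / 2)) := by
      have e1 : θ + (-θ + δ) / 2 + (-θ - δ) / 2 = 0 := by ring
      have e2 : θ * ((-θ + δ) / 2) + θ * ((-θ - δ) / 2) + ((-θ + δ) / 2) * ((-θ - δ) / 2)
          = - (3 * (A : L)) := by linear_combination -hδ2 / 4
      have e3 : θ * ((-θ + δ) / 2) * ((-θ - δ) / 2) = - (B : L) := by
        linear_combination hθ - θ * hδ2 / 4
      have c1 := congrArg (C : L → L[X]) e1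
      have c2 := congrArg (C : L → L[X]) e2
      have c3 := congrArg (C : L → L[X]) e3
      simp only [C_add, C_mul, C_neg, C_0] at c1 c2 c3
      rw [hfL]
      simp only [C_mul]
      linear_combination X ^ 2 * c1 - X * c2 + c3
    have hsp : f.IsSplittingField K L := by
      refine ⟨?_, ?_⟩
      · rw [hfac]
        exact ((Splits.X_sub_C _).mul (Splits.X_sub_C _)).mul (Splits.X_sub_C _)
      · rw [eq_top_iff, ← hgen]
        apply Algebra.adjoin_mono
        rw [Set.singleton_subset_iff, mem_rootSet]
        refine ⟨hf.ne_zero, ?_⟩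
        rw [aeval_def, ← eval_map, hfac]
        simp
    exact IsGalois.of_separable_splitting_field hf.separable
  have hcard : Nat.card (L ≃ₐ[K] L) = 3 := by rw [IsGalois.card_aut_eq_finrank, hdeg3]
  have : Fact (Nat.Prime 3) := ⟨Nat.prime_three⟩
  have hcyc : IsCyclic (L ≃ₐ[K] L) := isCyclic_of_prime_card hcard
  obtain ⟨σ, hσ⟩ := hcyc.exists_generator
  have hσ3 : ∀ x, σ (σ (σ x)) = x := by
    intro x
    have h : σ ^ 3 = 1 := by rw [← hcard]; exact pow_card_eq_one'
    have := congrArg (fun τ : L ≃ₐ[K] L => τ x) h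
    simpa [pow_succ] using this
  have hfixall : ∀ x, σ x = x → ∀ τ : L ≃ₐ[K] L, τ x = x := by
    intro x hx τ
    have h1 : Subgroup.zpowers σ ≤ MulAction.stabilizer (L ≃ₐ[K] L) x := by
      rw [Subgroup.zpowers_le]
      exact hx
    exact h1 (hσ τ)
  have ht1 : θ ≠ σ θ := by
    intro h
    have hall : ∀ τ : L ≃ₐ[K] L, τ = 1 := by
      intro τ
      have : (τ : L →ₐ[K] L) = ((1 : L ≃ₐ[K] L) : L →ₐ[K] L) := by
        apply AlgHom.ext_of_adjoin_eq_top hgen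
        rintro _ rfl
        exact hfixall _ h.symm τ
      ext x
      exact congrArg (fun g : L →ₐ[K] L => g x) this
    have hs1 : Subsingleton (L ≃ₐ[K] L) := ⟨fun x y => by rw [hall x, hall y]⟩
    have := Nat.card_of_subsingleton (1 : L ≃ₐ[K] L)
    omega
  have ht2 : θ ≠ σ (σ θ) := by
    intro h
    have := congrArg σ h
    rw [hσ3] at this
    exact ht1 this.symm
  have ht3 : σ θ ≠ σ (σ θ) := fun h => ht1 (σ.injective h)
  have hfix : ∀ x, σ x = x → ∃ y : K, algebraMap K L y = x := fun x hx =>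
    (IsGalois.mem_range_algebraMap_iff_fixed x).2 (hfixall x hx)
  -- Vieta
  have hθ2 : (σ θ) ^ 3 - 3 * (A : L) * σ θ + (B : L) = 0 := by
    simpa only [map_add, map_sub, map_mul, map_pow, map_zero, map_intCast, map_ofNat] using congrArg σ hθ
  have hθ3 : (σ (σ θ)) ^ 3 - 3 * (A : L) * σ (σ θ) + (B : L) = 0 := by
    simpa only [map_add, map_sub, map_mul, map_pow, map_zero, map_intCast, map_ofNat] using congrArg σ hθ2
  have r12 : θ ^ 2 + θ * σ θ + (σ θ) ^ 2 = 3 * A := by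
    apply mul_left_cancel₀ (sub_ne_zero.2 ht1)
    linear_combination hθ - hθ2
  have r13 : θ ^ 2 + θ * σ (σ θ) + (σ (σ θ)) ^ 2 = 3 * A := by
    apply mul_left_cancel₀ (sub_ne_zero.2 ht2)
    linear_combination hθ - hθ3
  have v1 : θ + σ θ + σ (σ θ) = 0 := by
    apply mul_left_cancel₀ (sub_ne_zero.2 ht3)
    linear_combination r12 - r13
  have v2 : θ * σ θ + θ * σ (σ θ) + σ θ * σ (σ θ) = ((-3 * A : ℤ) : L) := by
    push_cast
    linear_combination (θ + σ θ) * v1 - r12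
  have v3 : θ * σ θ * σ (σ θ) = ((-B : ℤ) : L) := by
    push_cast
    push_cast at v2
    linear_combination hθ - θ ^ 2 * v1 + θ * v2
  have hθint : IsIntegral ℤ θ := by
    have hgd : (C (-3 * A) * X + C B : ℤ[X]).degree < ((3 : ℕ) : WithBot ℕ) :=
      lt_of_le_of_lt degree_linear_le (by norm_num)
    refine ⟨X ^ 3 + (C (-3 * A) * X + C B), monic_X_pow_add (n := 3) hgd, ?_⟩
    simp only [eval₂_add, eval₂_mul, eval₂_C, eval₂_X, eval₂_X_pow]
    simp only [eq_intCast]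
    push_cast
    linear_combination hθ
  set η : L := θ * algebraMap K L s / 3 with hη
  have hη1 : η ^ 3 - A * m * η + B' * algebraMap K L s * m = 0 := by
    have hB9' : (B : L) = 9 * B' := by rw [hB9]; push_cast; ring
    rw [hB9'] at hθ
    rw [hη]
    linear_combination (algebraMap K L s * m / 9) * hθ +
      (θ ^ 3 * algebraMap K L s / 27) * hsL
  have hηint : IsIntegral ℤ η := by
    refine ⟨X ^ 6 - C (2 * A * m) * X ^ 4 + C (A ^ 2 * m ^ 2) * X ^ 2 - C (3 * B' ^ 2 * m ^ 3),
      by monicity!, ?_⟩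
    simp only [eval₂_add, eval₂_sub, eval₂_mul, eval₂_C, eval₂_X_pow]
    simp only [eq_intCast]
    push_cast
    linear_combination (η ^ 3 - A * m * η - B' * algebraMap K L s * m) * hη1 +
      (B' ^ 2 * m ^ 2 : L) * hsL
  have hση : σ η = σ θ * algebraMap K L s / 3 := by
    simp only [hη, map_div₀, map_mul, map_ofNat, AlgEquiv.commutes]
  have hσση : σ (σ η) = σ (σ θ) * algebraMap K L s / 3 := by
    simp only [hη, map_div₀, map_mul, map_ofNat, AlgEquiv.commutes]
  have w1 : η + σ η + σ (σ η) = 0 := by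
    rw [hσση, hση, hη]; linear_combination (algebraMap K L s / 3) * v1
  have w2 : η * σ η + η * σ (σ η) + σ η * σ (σ η) = ((-(A * m) : ℤ) : L) := by
    rw [hσση, hση, hη]
    push_cast at v2 ⊢
    linear_combination (algebraMap K L s ^ 2 / 9) * v2 - (A / 3 : L) * hsL
  refine h94 hdeg3 hμ σ hσ3 hfix θ ht1 ht2 (RingOfIntegers.mapRingHom (σ : L →+* L)) (fun x => rfl) ?_
  set J : Ideal (𝓞 L) := Ideal.span (Set.range fun y => RingOfIntegers.mapRingHom (σ : L →+* L) y - y) with hJ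
  let q := Ideal.Quotient.mk J
  have hq : ∀ y, q (RingOfIntegers.mapRingHom (σ : L →+* L) y) = q y := by
    intro y
    exact Ideal.Quotient.eq.2 (Ideal.subset_span ⟨y, rfl⟩)
  let S := RingOfIntegers.mapRingHom (L := L) (σ : L →+* L)
  let Θ : 𝓞 L := ⟨θ, hθint⟩
  let H : 𝓞 L := ⟨η, hηint⟩
  obtain ⟨a1, a2⟩ := h94_orbit q Θ (S Θ) (S (S Θ)) (hq _) (hq _) (-3 * A) (-B)
    (by apply RingOfIntegers.ext; simp only [map_add, map_mul, map_intCast, map_zero]; exact v1) (by apply RingOfIntegers.ext; simp only [map_add, map_mul, map_intCast, map_zero]; exact v2) (by apply RingOfIntegers.ext; simp only [map_add, map_mul, map_intCast, map_zero]; exact v3)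
  have b1 : ((-(A * m) : ℤ) : 𝓞 L ⧸ J) = 0 := by
    have e1 : H + S H + S (S H) = 0 := by apply RingOfIntegers.ext; simp only [map_add, map_mul, map_intCast, map_zero]; exact w1
    have e2 : H * S H + H * S (S H) + S H * S (S H) = ((-(A * m) : ℤ) : 𝓞 L) := by
      apply RingOfIntegers.ext; simp only [map_add, map_mul, map_intCast, map_zero]; exact w2
    have f1 := congrArg q e1
    have f2 := congrArg q e2
    simp only [map_add, map_mul, map_zero, map_intCast, hq, S] at f1 f2
    linear_combination q H * f1 - f2
  have c3 : (3 : 𝓞 L ⧸ J) = 0 := by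
    obtain ⟨u, v, huv⟩ := hAB
    have := congrArg (fun k : ℤ => (k : 𝓞 L ⧸ J)) huv
    push_cast at this a1 a2
    linear_combination -u * a1 - v * a2 - 3 * this
  have hk : ∃ k : ℤ, A * m = 3 * k + 1 := by
    refine ⟨A * m / 3, ?_⟩
    have : (A * m) % 3 = 1 := by rw [Int.mul_emod, hA3, hm3]; rfl
    omega
  obtain ⟨k, hk⟩ := hk
  have one0 : (1 : 𝓞 L ⧸ J) = 0 := by
    rw [hk] at b1
    push_cast at b1
    linear_combination -b1 - k * c3
  rw [Ideal.eq_top_iff_one, ← Ideal.Quotient.eq_zero_iff_mem, map_one]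
  exact one0

open Polynomial in
theorem h94_main (A B B' m : ℤ) (hA : Odd A) (hB : Odd B) (hAB : IsCoprime A B)
    (hA3 : A % 3 = 1) (hB9 : B = 9 * B') (hm : m = 4 * A ^ 3 - B ^ 2)
    {K : Type*} [Field K] [NumberField K]
    (hdeg : Module.finrank ℚ K = 2) (s : K) (hs : s ^ 2 = 3 * (m : K)) :
    3 ∣ classNumber K := by
  let f : K[X] := X ^ 3 + (C (-(3 * (A : K))) * X + C (B : K))
  have hfd : (C (-(3 * (A : K))) * X + C (B : K)).degree < ((3 : ℕ) : WithBot ℕ) :=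
    lt_of_le_of_lt degree_linear_le (by norm_num)
  have hfm : f.Monic := monic_X_pow_add (n := 3) hfd
  have hfn : f.natDegree = 3 := by simp only [f]; compute_degree!
  have hirr : Irreducible f := by
    rw [hfm.irreducible_iff_roots_eq_zero_of_degree_le_three (by omega) (by omega),
      Multiset.eq_zero_iff_forall_notMem]
    intro r hr
    rw [mem_roots hfm.ne_zero, IsRoot.def] at hr
    apply h94_noroot A B hA hB K hdeg r
    simp [f] at hr
    linear_combination hr
  have : Fact (Irreducible f) := ⟨hirr⟩
  have hfin : Module.Finite K (AdjoinRoot f) := hfm.finite_adjoinRoot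
  have hnf : NumberField (AdjoinRoot f) := NumberField.of_module_finite K (AdjoinRoot f)
  refine h94_cubic A B B' m hA hB hAB hA3 hB9 hm (L := AdjoinRoot f) hdeg s hs ?_ (AdjoinRoot.root f)
    ?_ AdjoinRoot.adjoinRoot_eq_top f hirr ?_
  · rw [(AdjoinRoot.powerBasis hirr.ne_zero).finrank, AdjoinRoot.powerBasis_dim, hfn]
  · have := AdjoinRoot.eval₂_root f
    have h2 : eval₂ (AdjoinRoot.of f) (AdjoinRoot.root f)
        (X ^ 3 + (C (-(3 * (A : K))) * X + C (B : K))) = 0 := this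
    simp only [eval₂_add, eval₂_mul, eval₂_C, eval₂_X, eval₂_X_pow] at h2
    simp only [map_neg, map_mul, map_ofNat, map_intCast] at h2
    linear_combination h2
  · change Polynomial.map _ (X ^ 3 + (C (-(3 * (A : K))) * X + C (B : K))) = _
    simp only [Polynomial.map_add, Polynomial.map_mul, Polynomial.map_pow, map_X, map_C]
    simp only [map_neg, map_mul, map_ofNat, map_intCast]
    ring

/-- Let `n > 1` be an integer and `a`, `b` odd integers with `gcd(a, b) = 1`, `a ≡ 1 (mod 3)`
and `b ≡ 0 (mod 3)`.  Then `3` divides the class number of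
`ℚ(√(3 * (4 * a ^ (3 * n) - b ^ (2 * n))))`. -/
theorem class_number_div_three_of_sqrt_three_mul_four_pow_sub_pow
    (n : ℕ) (hn : 1 < n)
    (a b : ℤ) (haodd : Odd a) (hbodd : Odd b) (hgcd : Int.gcd a b = 1)
    (ha : a ≡ 1 [ZMOD 3]) (hb : b ≡ 0 [ZMOD 3])
    (K : Type*) [Field K] [NumberField K] (hdeg : Module.finrank ℚ K = 2)
    (hsqrt : ∃ α : K, α ^ 2 = 3 * (4 * (a : K) ^ (3 * n) - (b : K) ^ (2 * n))) :
    3 ∣ NumberField.classNumber K := by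
  obtain ⟨α, hα⟩ := hsqrt
  have h3 : (3 : ℤ) ∣ b := Int.modEq_zero_iff_dvd.1 hb
  have h9 : (9 : ℤ) ∣ b ^ n :=
    (show (9 : ℤ) = 3 ^ 2 by norm_num) ▸ (pow_dvd_pow_of_dvd h3 2).trans (pow_dvd_pow b hn)
  obtain ⟨B', hB'⟩ := h9
  refine h94_main (a ^ n) (b ^ n) B' _ haodd.pow hbodd.pow
    (Int.isCoprime_iff_gcd_eq_one.2 hgcd).pow ?_ hB' rfl hdeg α ?_
  · have := ha.pow n
    rw [one_pow] at this
    exact this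
  · rw [hα]
    push_cast
    ring
end

section
/- Let m be an odd positive integer with m ≡ 0 (mod 3). Then 3 divides the class number of the imaginary quadratic field ℚ(√(−3(4m³ + 1))). -/
theorem gal_ideal {R S : Type*} [CommRing R] [CommRing S] [Algebra R S] (σ : S →+* S)
    (h3 : ∀ x, σ (σ (σ x)) = x)
    (hfix : ∀ x, σ x = x → ∃ r, algebraMap R S r = x)
    (hD : Ideal.span (Set.range fun x : S => x - σ x) = ⊤)
    (J : Ideal S) (hJ : ∀ x ∈ J, σ x ∈ J) :
    (J.comap (algebraMap R S)).map (algebraMap R S) = J := by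
  apply le_antisymm Ideal.map_comap_le
  intro j hj
  set J' := (J.comap (algebraMap R S)).map (algebraMap R S) with hJ'
  have key : ∀ I : Ideal S, (∀ x, x - σ x ∈ I) → I = ⊤ := by
    intro I hI
    rw [eq_top_iff, ← hD, Ideal.span_le]
    rintro _ ⟨x, rfl⟩
    exact hI x
  have tr : ∀ b, b * j + σ b * σ j + σ (σ b) * σ (σ j) ∈ J' := by
    intro b
    obtain ⟨r, hr⟩ := hfix (b * j + σ b * σ j + σ (σ b) * σ (σ j)) (by
      simp only [map_add, map_mul, h3]; ring)
    rw [← hr]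
    apply Ideal.mem_map_of_mem
    rw [Ideal.mem_comap, hr]
    exact J.add_mem (J.add_mem (J.mul_mem_left _ hj) (J.mul_mem_left _ (hJ _ hj)))
      (J.mul_mem_left _ (hJ _ (hJ _ hj)))
  have s1 : ∀ x b, (x - σ (σ x)) * b * j + (σ x - σ (σ x)) * σ b * σ j ∈ J' := by
    intro x b
    have := J'.sub_mem (tr (x * b)) (J'.mul_mem_left (σ (σ x)) (tr b))
    convert this using 1
    simp only [map_mul]; ring
  have s2 : ∀ x y, (y - σ y) * ((x - σ (σ x)) * j) ∈ J' := by
    intro x y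
    have := J'.sub_mem (s1 x y) (J'.mul_mem_left (σ y) (s1 x 1))
    convert this using 1
    simp only [map_one]; ring
  have s3 : ∀ x, (x - σ (σ x)) * j ∈ J' := by
    intro x
    have := key (J'.colon {(x - σ (σ x)) * j}) (fun y => by
      rw [Submodule.mem_colon_singleton]; exact s2 x y)
    have h1 : (1 : S) ∈ J'.colon {(x - σ (σ x)) * j} := by rw [this]; trivial
    rw [Submodule.mem_colon_singleton] at h1
    simpa using h1
  have := key (J'.colon {j}) (fun y => by
      rw [Submodule.mem_colon_singleton]
      have := J'.neg_mem (s3 (σ y))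
      rw [h3] at this
      convert this using 1
      rw [smul_eq_mul]; ring)
  have h1 : (1 : S) ∈ J'.colon {j} := by rw [this]; trivial
  rw [Submodule.mem_colon_singleton] at h1
  simpa using h1

theorem gal_unit_aux {R S : Type*} [CommRing R] [CommRing S] [IsDomain S] [Algebra R S]
    (hinj : Function.Injective (algebraMap R S)) (σ : S →+* S)
    (hσ : ∀ r, σ (algebraMap R S r) = algebraMap R S r)
    (h3 : ∀ x, σ (σ (σ x)) = x)
    (hfix : ∀ x, σ x = x → ∃ r, algebraMap R S r = x)
    (hD : Ideal.span (Set.range fun x : S => x - σ x) = ⊤)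
    (h : ℕ) (hh : ¬ 3 ∣ h) (hcl : ∀ I : Ideal R, ∃ d, I ^ h = Ideal.span {d})
    (hw : ∀ v : Rˣ, ∃ w : Rˣ, v = w ^ 3)
    (θ : S) (hθ : (θ - σ θ) * (θ - σ (σ θ)) ≠ 0)
    (u : S) (hu : u * σ u * σ (σ u) = 1) :
    ∃ e : S, u * σ e = e ∧ e * σ e * σ (σ e) = 1 := by
  -- Hilbert 90
  obtain ⟨a, ha0, ha⟩ : ∃ a : S, a ≠ 0 ∧ u * σ a = a := by
    by_contra! hcon
    have hz : ∀ c, c + u * σ c + u * σ u * σ (σ c) = 0 := by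
      intro c
      by_contra hc
      refine hcon _ hc ?_
      simp only [map_add, map_mul, h3]
      linear_combination c * hu
    have h0 := hz 1
    have h1 := hz θ
    have h2 := hz (θ ^ 2)
    simp only [map_pow, map_one] at h0 h1 h2
    apply hθ
    linear_combination h2 - (σ θ + σ (σ θ)) * h1 + σ θ * σ (σ θ) * h0
  have huu : IsUnit u := IsUnit.of_mul_eq_one (σ u * σ (σ u)) (by rw [← hu]; ring)
  -- the ideal (a) is invariant
  have hJ := gal_ideal σ h3 hfix hD (Ideal.span {a}) (by
    intro x hx
    rw [Ideal.mem_span_singleton] at hx ⊢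
    refine dvd_trans ?_ (map_dvd σ hx)
    exact ⟨σ u * σ (σ u), by linear_combination (σ u * σ (σ u)) * ha - (σ a) * hu⟩)
  obtain ⟨d, hd⟩ := hcl ((Ideal.span {a}).comap (algebraMap R S))
  have hd' : Associated (a ^ h) (algebraMap R S d) := by
    rw [← Ideal.span_singleton_eq_span_singleton, ← Ideal.span_singleton_pow, ← hJ, ← Ideal.map_pow,
      hd, Ideal.map_span, Set.image_singleton]
  have hfa : a = u * σ u * σ (σ a) := by
    conv_lhs => rw [← ha]
    conv_lhs => rw [← ha]
    simp only [map_mul]; ring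
  obtain ⟨c, hc⟩ := hfix (a * σ a * σ (σ a)) (by simp only [map_mul, h3]; ring)
  have hc' : Associated (a ^ 3) (algebraMap R S c) := by
    have : a ^ 3 = (u * (u * σ u)) * algebraMap R S c := by
      rw [hc]
      calc a ^ 3 = a * a * a := by ring
        _ = a * (u * σ a) * (u * σ u * σ (σ a)) := by rw [ha, ← hfa]
        _ = _ := by ring
    rw [this]
    exact associated_unit_mul_left _ _ (huu.mul (huu.mul (huu.map σ)))
  obtain ⟨b1, b2, hb1, hb⟩ : ∃ b1 b2 : R, b1 ≠ 0 ∧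
      Associated (algebraMap R S b1 * a) (algebraMap R S b2) := by
    have hk : ∀ k, Associated (a ^ (3 * k)) (algebraMap R S (c ^ k)) := by
      intro k; rw [pow_mul, map_pow]; exact hc'.pow_pow
    have nz : ∀ (b : R) (n : ℕ), Associated (a ^ n) (algebraMap R S b) → b ≠ 0 := by
      rintro b n hb rfl
      rw [map_zero, associated_zero_iff_eq_zero] at hb
      exact pow_ne_zero _ ha0 hb
    have h12 : h % 3 = 1 ∨ h % 3 = 2 := by omega
    rcases h12 with h1 | h2
    · refine ⟨c ^ (h / 3), d, nz _ _ (hk _), ?_⟩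
      refine ((hk _).symm.mul_right a).trans ?_
      rw [← pow_succ, show 3 * (h / 3) + 1 = h by omega]
      exact hd'
    · refine ⟨d, c ^ (h / 3 + 1), nz _ _ hd', ?_⟩
      refine (hd'.symm.mul_right a).trans ?_
      rw [← pow_succ, show h + 1 = 3 * (h / 3 + 1) by omega]
      exact hk _
  obtain ⟨ε, hε⟩ := hb
  have hb1' : algebraMap R S b1 ≠ 0 := fun hz => hb1 (hinj (by rw [hz, map_zero]))
  have hb2' : algebraMap R S b2 ≠ 0 := by
    rw [← hε]; exact mul_ne_zero (mul_ne_zero hb1' ha0) ε.ne_zero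
  -- b1 a ε = b2, set e = ε⁻¹
  have he : u * σ (↑ε⁻¹ : S) = (↑ε⁻¹ : S) := by
    have e1 : algebraMap R S b1 * a = algebraMap R S b2 * (↑ε⁻¹ : S) := by
      rw [← hε, mul_assoc, Units.mul_inv, mul_one]
    have e2 : algebraMap R S b1 * σ a = algebraMap R S b2 * σ (↑ε⁻¹ : S) := by
      have := congrArg σ e1
      simpa only [map_mul, hσ] using this
    apply mul_left_cancel₀ hb2'
    rw [← e1]
    conv_rhs => rw [← ha]
    linear_combination (-u) * e2
  have hN : ∀ x : S, ∃ r, algebraMap R S r = x * σ x * σ (σ x) := fun x =>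
    hfix _ (by simp only [map_mul, h3]; ring)
  obtain ⟨v, hv⟩ := hN (↑ε⁻¹ : S)
  obtain ⟨v', hv'⟩ := hN (ε : S)
  have hvv : v * v' = 1 := hinj (by
    rw [map_mul, hv, hv', map_one]
    have e1 : (↑ε⁻¹ : S) * ε = 1 := ε.inv_mul
    have e2 := congrArg σ e1
    have e3 := congrArg σ e2
    simp only [map_mul, map_one] at e2 e3
    calc _ = ((↑ε⁻¹ : S) * ε) * (σ (↑ε⁻¹ : S) * σ ε) * (σ (σ (↑ε⁻¹ : S)) * σ (σ ε)) := by ring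
      _ = 1 := by rw [e1, e2, e3]; ring)
  obtain ⟨w, hw⟩ := hw (Units.mkOfMulEqOne v v' hvv)
  have hw' : v = (w : R) ^ 3 := by simpa using congrArg Units.val hw
  refine ⟨(↑ε⁻¹ : S) * algebraMap R S (↑w⁻¹ : R), ?_, ?_⟩
  · rw [map_mul, hσ, ← mul_assoc, he]
  · simp only [map_mul, hσ]
    calc _ = ((↑ε⁻¹ : S) * σ (↑ε⁻¹ : S) * σ (σ (↑ε⁻¹ : S))) * algebraMap R S (↑w⁻¹ : R) ^ 3 := by ring
      _ = algebraMap R S ((w * (↑w⁻¹ : R)) ^ 3) := by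
        rw [← hv, hw', ← map_pow, ← map_mul, mul_pow]
      _ = 1 := by simp

theorem gal_unit_cube {R S : Type*} [CommRing R] [CommRing S] [IsDomain S] [Algebra R S]
    (hinj : Function.Injective (algebraMap R S)) (σ : S →+* S)
    (hσ : ∀ r, σ (algebraMap R S r) = algebraMap R S r)
    (h3 : ∀ x, σ (σ (σ x)) = x)
    (hfix : ∀ x, σ x = x → ∃ r, algebraMap R S r = x)
    (hD : Ideal.span (Set.range fun x : S => x - σ x) = ⊤)
    (h : ℕ) (hh : ¬ 3 ∣ h) (hcl : ∀ I : Ideal R, ∃ d, I ^ h = Ideal.span {d})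
    (hw : ∀ v : Rˣ, ∃ w : Rˣ, v = w ^ 3)
    (θ : S) (hθ : (θ - σ θ) * (θ - σ (σ θ)) ≠ 0)
    (u : S) (hu : u * σ u * σ (σ u) = 1) :
    ∃ t : S, u = t ^ 3 ∧ t * σ t * σ (σ t) = 1 := by
  obtain ⟨e, he, hne⟩ := gal_unit_aux hinj σ hσ h3 hfix hD h hh hcl hw θ hθ u hu
  obtain ⟨f, hf, hnf⟩ := gal_unit_aux hinj σ hσ h3 hfix hD h hh hcl hw θ hθ e hne
  -- t = (σ f)⁻¹ = f * σ (σ f)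
  refine ⟨f * σ (σ f), ?_, ?_⟩
  · -- u σ e = e, e σ f = f
    have hf2 := congrArg σ hf
    simp only [map_mul] at hf2
    have E : e = f * (f * σ (σ f)) := by
      linear_combination (f * σ (σ f)) * hf - e * hnf
    have SE : σ e = σ f * (σ f * f) := by rw [E]; simp only [map_mul, h3]
    have hu2 : u * (σ f * (σ f * f)) = f * (f * σ (σ f)) := by rw [← SE, he, E]
    linear_combination (f * σ (σ f) ^ 2) * hu2 - u * (f * σ f * σ (σ f) + 1) * hnf
  · simp only [map_mul, h3]
    linear_combination (f * σ f * σ (σ f) + 1) * hnf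

theorem unit_div {L : Type*} [Field L] [NumberField L] (u : (NumberField.RingOfIntegers L)ˣ)
    (hu : ∀ n : ℕ, ∃ t : (NumberField.RingOfIntegers L)ˣ, u = t ^ 3 ^ n) : ∃ n, 0 < n ∧ u ^ n = 1 := by
  rw [← isOfFinOrder_iff_pow_eq_one, ← CommGroup.mem_torsion]
  change u ∈ NumberField.Units.torsion L
  obtain ⟨⟨ζ, f⟩, hf, huniq⟩ := NumberField.Units.exist_unique_eq_mul_prod L u
  have hf0 : ∀ i, f i = 0 := by
    intro i
    by_contra hne
    obtain ⟨t, ht⟩ := hu (f i).natAbs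
    obtain ⟨⟨ζ', g⟩, hg, -⟩ := NumberField.Units.exist_unique_eq_mul_prod L t
    have := huniq ⟨ζ' ^ 3 ^ (f i).natAbs, fun j => g j * ((3 ^ (f i).natAbs : ℕ) : ℤ)⟩ (by
      simp only at hg ⊢
      rw [ht, hg, mul_pow, ← Finset.prod_pow]
      simp only [zpow_mul, zpow_natCast, SubmonoidClass.coe_pow])
    have h1 : g i * ((3 ^ (f i).natAbs : ℕ) : ℤ) = f i := congrFun (congrArg Prod.snd this) i
    have hd : ((3 ^ (f i).natAbs : ℕ) : ℤ) ∣ f i := ⟨g i, by rw [mul_comm]; exact h1.symm⟩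
    have := Int.le_of_dvd (abs_pos.mpr hne) ((dvd_abs _ _).mpr hd)
    have h2 : (f i).natAbs < 3 ^ (f i).natAbs := Nat.lt_pow_self (by norm_num)
    rw [Int.abs_eq_natAbs] at this
    omega
  simp only [hf0, zpow_zero, Finset.prod_const_one, mul_one] at hf
  rw [hf]
  exact ζ.2
theorem not_sq (m : ℤ) (hm : 0 < m) (q : ℚ) (hq : q ^ 2 = 4 * (m : ℚ) ^ 3 + 1) : False := by
  have h1 : IsSquare (((4 * m ^ 3 + 1 : ℤ)) : ℚ) := ⟨q, by push_cast; rw [← hq]; ring⟩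
  rw [Rat.isSquare_intCast_iff] at h1
  obtain ⟨n, hn⟩ := h1
  have hodd : Odd n := by
    by_contra hne
    rw [Int.not_odd_iff_even] at hne
    obtain ⟨r, rfl⟩ := hne
    have : 2 * (2 * (r * r) - 2 * m ^ 3) = 1 := by linear_combination -hn
    omega
  obtain ⟨j, rfl⟩ := hodd
  have hj : j * (j + 1) = m ^ 3 := by
    have : 4 * (j * (j + 1)) = 4 * m ^ 3 := by linear_combination -hn
    omega
  have hcop : IsCoprime j (j + 1) := ⟨-1, 1, by ring⟩
  have h3 : Odd 3 := by decide
  obtain ⟨a, ha⟩ := Int.eq_pow_of_mul_eq_pow_odd_left hcop h3 hj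
  obtain ⟨b, hb⟩ := Int.eq_pow_of_mul_eq_pow_odd_right hcop h3 hj
  have hm3 : m ^ 3 ≠ 0 := by positivity
  have ha0 : a ≠ 0 := by
    rintro rfl
    apply hm3; rw [← hj, ha]; ring
  have hb0 : b ≠ 0 := by
    rintro rfl
    apply hm3; rw [← hj, hb]; ring
  exact (fermatLastTheoremFor_iff_int.mp fermatLastTheoremThree) a 1 b ha0 one_ne_zero hb0
    (by rw [← ha, ← hb]; ring)

section
open NumberField

theorem K_repr (m : ℤ) (hm : 0 < m) (K : Type*) [Field K] [NumberField K]
    (hdeg : Module.finrank ℚ K = 2) (α : K) (hα : α ^ 2 = -3 * (4 * (m : K) ^ 3 + 1)) :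
    (∀ q : ℚ, (q : K) ≠ α) ∧ ∀ x : K, ∃ p q : ℚ, x = p + q * α := by
  have hno : ∀ q : ℚ, (q : K) ≠ α := by
    rintro q rfl
    have h : q ^ 2 = -3 * (4 * (m : ℚ) ^ 3 + 1) := by exact_mod_cast hα
    have hm' : (0 : ℚ) < m := by exact_mod_cast hm
    have : 0 < (m : ℚ) ^ 3 := by positivity
    nlinarith [sq_nonneg q]
  refine ⟨hno, ?_⟩
  have hli : LinearIndependent ℚ ![(1 : K), α] := by
    rw [LinearIndependent.pair_iff]
    intro s t hst
    have ht : t = 0 := by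
      by_contra ht
      have ht' : (t : K) ≠ 0 := by exact_mod_cast ht
      apply hno (-s / t)
      push_cast
      rw [div_eq_iff ht']
      simp only [Rat.smul_def] at hst
      linear_combination -hst
    subst ht
    simpa [Rat.smul_def] using hst
  have hsp := hli.span_eq_top_of_card_eq_finrank' (by simp [hdeg])
  intro x
  have hx : x ∈ Submodule.span ℚ (Set.range ![(1 : K), α]) := by rw [hsp]; trivial
  rw [Matrix.range_cons, Matrix.range_cons, Matrix.range_empty, Set.union_empty,
    Set.singleton_union, Submodule.mem_span_pair] at hx
  obtain ⟨p, q, h⟩ := hx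
  exact ⟨p, q, by rw [← h, Rat.smul_def, Rat.smul_def]; ring⟩

theorem K_units (m : ℤ) (hm : 0 < m) (K : Type*) [Field K] [NumberField K]
    (hdeg : Module.finrank ℚ K = 2) (α : K) (hα : α ^ 2 = -3 * (4 * (m : K) ^ 3 + 1))
    (v : (𝓞 K)ˣ) : ∃ w : (𝓞 K)ˣ, v = w ^ 3 := by
  obtain ⟨hno, hrep⟩ := K_repr m hm K hdeg α hα
  -- no primitive cube roots of unity
  have hs : ∀ s : K, s ^ 2 ≠ -3 := by
    intro s hs
    obtain ⟨p, q, rfl⟩ := hrep s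
    have e : ((2 * p * q : ℚ) : K) * α = ((3 * (4 * (m : ℚ) ^ 3 + 1) * q ^ 2 - p ^ 2 - 3 : ℚ) : K) := by
      push_cast
      linear_combination hs - (q : K) ^ 2 * hα
    have hpq : 2 * p * q = 0 := by
      by_contra hne
      apply hno ((3 * (4 * (m : ℚ) ^ 3 + 1) * q ^ 2 - p ^ 2 - 3) / (2 * p * q))
      rw [Rat.cast_div, ← e, mul_div_cancel_left₀]
      exact_mod_cast hne
    rw [hpq, Rat.cast_zero, zero_mul] at e
    have e' : 3 * (4 * (m : ℚ) ^ 3 + 1) * q ^ 2 - p ^ 2 - 3 = 0 := by exact_mod_cast e.symm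
    by_cases hq : q = 0
    · subst hq; nlinarith [sq_nonneg p]
    · have hp : p = 0 := by
        rcases mul_eq_zero.mp hpq with h | h
        · linarith
        · exact absurd h hq
      subst hp
      apply not_sq m hm q⁻¹
      field_simp
      linarith
  have : IsTotallyComplex K := ⟨by
    intro w
    rw [← InfinitePlace.not_isReal_iff_isComplex]
    intro hw
    have h := congrArg (InfinitePlace.embedding_of_isReal hw) hα
    simp only [map_pow, map_mul, map_neg, map_add, map_intCast, map_ofNat, map_one] at h
    have hm' : (0 : ℝ) < m := by exact_mod_cast hm
    have : 0 < (m : ℝ) ^ 3 := by positivity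
    nlinarith [sq_nonneg (InfinitePlace.embedding_of_isReal hw α)]⟩
  have hrank : Units.rank K = 0 := by
    have h1 := InfinitePlace.card_eq_nrRealPlaces_add_nrComplexPlaces K
    have h2 := IsTotallyComplex.nrRealPlaces_eq_zero K
    have h3 := InfinitePlace.card_add_two_mul_card_eq_rank K
    rw [Units.rank]
    omega
  have hv : v ∈ Units.torsion K := by
    obtain ⟨⟨ζ, f⟩, hf, -⟩ := Units.exist_unique_eq_mul_prod K v
    have : IsEmpty (Fin (Units.rank K)) := by rw [hrank]; infer_instance
    simp only [Finset.univ_eq_empty, Finset.prod_empty, mul_one] at hf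
    rw [hf]; exact ζ.2
  have hfin : IsOfFinOrder v := (CommGroup.mem_torsion _).mp hv
  have hcop : Nat.Coprime 3 (orderOf v) := by
    rw [Nat.Prime.coprime_iff_not_dvd Nat.prime_three]
    rintro ⟨n, hn⟩
    have hpos := hfin.orderOf_pos
    have h1 : (v ^ n) ^ 3 = 1 := by rw [← pow_mul, mul_comm, ← hn, pow_orderOf_eq_one]
    have h2 : v ^ n ≠ 1 := pow_ne_one_of_lt_orderOf (by omega) (by omega)
    set z : K := (((v ^ n : (𝓞 K)ˣ) : 𝓞 K) : K) with hz
    have h1' : z ^ 3 = 1 := by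
      have := congrArg (fun x : (𝓞 K)ˣ => ((x : 𝓞 K) : K)) h1
      simpa [hz] using this
    have h2' : z ≠ 1 := by
      intro h
      apply h2
      ext
      rw [← hz, h]; simp
    have h4 : (z - 1) * (z ^ 2 + z + 1) = 0 := by linear_combination h1'
    have h5 := (mul_eq_zero.mp h4).resolve_left (sub_ne_zero.mpr h2')
    exact hs (2 * z + 1) (by linear_combination 4 * h5)
  obtain ⟨k, hk⟩ := exists_pow_eq_self_of_coprime hcop
  exact ⟨v ^ k, by rw [← pow_mul, mul_comm, pow_mul, hk]⟩
end
section
open NumberField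

theorem cl_pow (K : Type*) [Field K] [NumberField K] (I : Ideal (𝓞 K)) :
    ∃ d, I ^ classNumber K = Ideal.span {d} := by
  by_cases hI : I = ⊥
  · refine ⟨0, ?_⟩
    subst hI
    have : classNumber K ≠ 0 := classNumber_ne_zero K
    rw [← Ideal.zero_eq_bot, zero_pow this]; simp
  · have hI0 : I ∈ nonZeroDivisors (Ideal (𝓞 K)) := mem_nonZeroDivisors_of_ne_zero hI
    have h1 : ClassGroup.mk0 (⟨I, hI0⟩ : nonZeroDivisors (Ideal (𝓞 K))) ^ classNumber K = 1 := by
      rw [classNumber, pow_card_eq_one]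
    rw [← map_pow] at h1
    have h2 := (ClassGroup.mk0_eq_one_iff (pow_mem hI0 (classNumber K))).mp h1
    exact h2.principal

set_option maxHeartbeats 1000000 in
theorem core (m k : ℤ) (hm : 0 < m) (hk : m = 3 * k) (K L : Type*) [Field K] [NumberField K]
    [Field L] [NumberField L] [Algebra K L] (α : K)
    (hα : α ^ 2 = -3 * (4 * (m : K) ^ 3 + 1))
    (hunits : ∀ v : (𝓞 K)ˣ, ∃ w : (𝓞 K)ˣ, v = w ^ 3)
    (θ : L) (hθ : θ ^ 3 + 3 * m * θ - 1 = 0)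
    (hgen : ∀ x : L, ∃ p q r : K, x = algebraMap K L p + algebraMap K L q * θ + algebraMap K L r * θ ^ 2)
    (htor : ∀ n : ℕ, 0 < n → θ ^ n ≠ 1)
    (σ : L →ₐ[K] L)
    (hσθ : σ θ = (-θ + algebraMap K L α * (2 * m * θ ^ 2 + θ + 4 * m ^ 2) / (4 * m ^ 3 + 1)) / 2) :
    3 ∣ classNumber K := by
  by_contra hndvd
  have hN : (4 * (m : L) ^ 3 + 1) ≠ 0 := by
    have : (4 * m ^ 3 + 1 : ℤ) ≠ 0 := by positivity
    exact_mod_cast this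
  set A := algebraMap K L α with hA
  have hA2 : A ^ 2 = -3 * (4 * (m : L) ^ 3 + 1) := by
    rw [hA, ← map_pow, hα]; simp only [map_mul, map_neg, map_add, map_pow, map_ofNat, map_intCast, map_one]
  have hσA : σ A = A := σ.commutes α
  set g : L := 2 * m * θ ^ 2 + θ + 4 * m ^ 2 with hg
  set B : L := A * g / (4 * m ^ 3 + 1) with hB
  have hBN : B * (4 * m ^ 3 + 1) = A * g := by rw [hB]; field_simp
  have hAB : A * B = -3 * g := by
    apply mul_right_cancel₀ hN
    linear_combination A * hBN + g * hA2
  have hg2 : g ^ 2 = (4 * m ^ 3 + 1) * (θ ^ 2 + 4 * m) := by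
    rw [hg]; linear_combination (4 * m ^ 2 * θ + 4 * m) * hθ
  have hB2 : B ^ 2 = -3 * θ ^ 2 - 12 * m := by
    apply mul_right_cancel₀ hN
    linear_combination B * hBN + g * hAB - 3 * hg2
  set t2 := σ θ with ht2
  have hB' : B = 2 * t2 + θ := by rw [hσθ]; ring
  have ht3 : σ t2 = -θ - t2 := by
    have h1 := congrArg σ hBN
    have h2 : σ B = 2 * σ t2 + t2 := by rw [hB']; simp only [map_mul, map_neg, map_sub, map_div₀, map_add, map_pow, map_ofNat, map_intCast, map_one, ht2]
    have h3 : σ g = 2 * m * t2 ^ 2 + t2 + 4 * m ^ 2 := by rw [hg]; simp only [map_mul, map_neg, map_sub, map_div₀, map_add, map_pow, map_ofNat, map_intCast, map_one, ht2]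
    simp only [map_mul, map_add, map_pow, map_intCast, map_ofNat, map_one, hσA, h2, h3] at h1
    have h4 : t2 = (B - θ) / 2 := by rw [hB']; ring
    rw [h4] at h1 ⊢
    apply mul_left_cancel₀ (mul_ne_zero two_ne_zero hN)
    have h5 : A * (2 * m * ((B - θ) / 2) ^ 2 + (B - θ) / 2 + 4 * m ^ 2)
      = (4 * m ^ 3 + 1) * (- 3 * θ / 2 - B / 2) := by
      have e1 : g * (1 - 2 * m * θ) = (4 * m ^ 3 + 1) * θ := by
        rw [hg]; linear_combination (-4 * m ^ 2) * hθ
      have e2 : A * (2 * m * ((B - θ) / 2) ^ 2 + (B - θ) / 2 + 4 * m ^ 2)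
          = -(A * g) / 2 + (A * B) / 2 - m * θ * (A * B) := by
        rw [hg]; linear_combination (A * m / 2) * hB2
      rw [e2, hAB, ← hBN]
      linear_combination (-3 / 2) * e1
    rw [h5] at h1
    linear_combination h1
  have hsum2 : θ ^ 2 + θ * t2 + t2 ^ 2 + 3 * m = 0 := by
    rw [hB'] at hB2
    linear_combination (1 / 4) * hB2
  have hprod : θ * t2 * (-θ - t2) = 1 := by
    linear_combination hθ - θ * hsum2
  have hσ3 : ∀ x, σ (σ (σ x)) = x := by
    intro x
    obtain ⟨p, q, r, rfl⟩ := hgen x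
    have : σ (σ (σ θ)) = θ := by rw [← ht2, ht3, map_sub, map_neg, ht3, ← ht2]; ring
    simp only [map_add, map_mul, map_pow, AlgHom.commutes, this]
  have hfixL : ∀ x, σ x = x → ∃ r, algebraMap K L r = x := by
    intro x hx
    obtain ⟨p, q, r, hpqr⟩ := hgen x
    refine ⟨p - 2 * m * r, ?_⟩
    have h1 : σ x = algebraMap K L p + algebraMap K L q * t2 + algebraMap K L r * t2 ^ 2 := by
      rw [hpqr]; simp only [map_add, map_mul, map_pow, AlgHom.commutes, ht2]
    have h2 : σ (σ x) = algebraMap K L p + algebraMap K L q * (-θ - t2) + algebraMap K L r * (-θ - t2) ^ 2 := by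
      rw [h1]; simp only [map_add, map_mul, map_pow, AlgHom.commutes, ht3]
    rw [hx] at h1
    rw [hx, hx] at h2
    simp only [map_sub, map_mul, map_ofNat, map_intCast]
    linear_combination (-1 / 3) * (hpqr + h1 + h2) - (2 / 3) * algebraMap K L r * hsum2
  -- integral elements
  have hθi : IsIntegral ℤ θ := by
    refine ⟨Polynomial.X ^ 3 + Polynomial.C (3 * m) * Polynomial.X - Polynomial.C 1, by monicity!, ?_⟩
    simp only [Polynomial.eval₂_add, Polynomial.eval₂_sub, Polynomial.eval₂_mul, Polynomial.eval₂_pow, Polynomial.eval₂_X, Polynomial.eval₂_C]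
    simp only [eq_intCast]
    push_cast
    exact hθ
  set z : L := (θ - 1) * A / 3 with hz
  have hmk : (m : L) = 3 * k := by rw [hk]; push_cast; ring
  have hzi : IsIntegral ℤ z := by
    have hq : IsIntegral ℤ ((θ - 1) ^ 2 / 3) := by
      refine ⟨Polynomial.X ^ 3 + Polynomial.C (6 * k - 1) * Polynomial.X ^ 2
        + Polynomial.C (9 * k ^ 2 + 1) * Polynomial.X - Polynomial.C (3 * k ^ 2), by monicity!, ?_⟩
      simp only [Polynomial.eval₂_add, Polynomial.eval₂_sub, Polynomial.eval₂_mul, Polynomial.eval₂_pow, Polynomial.eval₂_X, Polynomial.eval₂_C]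
      simp only [eq_intCast]
      push_cast
      have hy := hθ
      rw [hmk] at hy
      linear_combination (1 / 27 : L) * (θ ^ 3 - 6 * θ ^ 2 + (12 + 9 * k) * θ - 7 - 18 * k) * hy
    have hz2 : IsIntegral ℤ (z ^ 2) := by
      have : z ^ 2 = ((-(4 * m ^ 3 + 1) : ℤ) : L) * ((θ - 1) ^ 2 / 3) := by
        rw [hz]; push_cast; linear_combination ((θ - 1) ^ 2 / 9) * hA2
      rw [this]
      exact (isIntegral_algebraMap (R := ℤ) (A := L)).mul hq
    exact hz2.of_pow (by norm_num)
  let s : 𝓞 L →+* 𝓞 L := RingOfIntegers.mapRingHom (σ : L →+* L)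
  have hs : ∀ x : 𝓞 L, ((s x : 𝓞 L) : L) = σ (x : L) := fun x => rfl
  let Θ : 𝓞 L := ⟨θ, hθi⟩
  let Z : 𝓞 L := ⟨z, hzi⟩
  have hΘ : (Θ : L) = θ := rfl
  have hZ : (Z : L) = z := rfl
  have sinj : Function.Injective (fun x : 𝓞 L => (x : L)) := RingOfIntegers.coe_injective
  have s3 : ∀ x, s (s (s x)) = x := fun x => sinj (by simp only [hs, hσ3])
  have hNΘ : Θ * s Θ * s (s Θ) = 1 := sinj (by
    simp only [map_mul, hs, hΘ, map_one]
    rw [← ht2, ht3, hprod])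
  have halg : ∀ r : 𝓞 K, ((algebraMap (𝓞 K) (𝓞 L) r : 𝓞 L) : L) = algebraMap K L (r : K) := fun r => rfl
  have hcube := gal_unit_cube (R := 𝓞 K) (S := 𝓞 L)
    (fun x y hxy => by
      apply RingOfIntegers.coe_injective
      apply (algebraMap K L).injective
      rw [← halg, ← halg, hxy]) s
    (fun r => sinj (by simp only [hs, halg, AlgHom.commutes])) s3
    (fun x hx => by
      obtain ⟨r, hr⟩ := hfixL (x : L) (by rw [← hs, hx])
      have hri : IsIntegral ℤ r := by
        have : IsIntegral ℤ ((x : 𝓞 L) : L) := x.2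
        change IsIntegral ℤ (x : L) at this
        rw [← hr] at this
        exact (isIntegral_algebraMap_iff (algebraMap K L).injective).mp this
      exact ⟨⟨r, hri⟩, sinj hr⟩)
    (by
      set D := Ideal.span (Set.range fun x : 𝓞 L => x - s x) with hD
      have hmem : ∀ x, x - s x ∈ D := fun x => Ideal.subset_span ⟨x, rfl⟩
      have hmem2 : ∀ x, x - s (s x) ∈ D := fun x => by
        have := D.add_mem (hmem x) (hmem (s x))
        rwa [sub_add_sub_cancel] at this
      have hsΘ : Θ + s Θ + s (s Θ) = 0 := sinj (by
        simp only [map_add, hs, hΘ, map_zero]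
        rw [← ht2, ht3]; ring)
      have hsZ : Z * s Z + Z * s (s Z) + s Z * s (s Z) = ((-(4 * m ^ 3 + 1) * (1 + 3 * k) : ℤ) : 𝓞 L) := sinj (by
        simp only [map_add, map_mul, hs, hZ, map_intCast]
        have e1 : σ z = (t2 - 1) * A / 3 := by rw [hz]; simp only [map_mul, map_neg, map_sub, map_div₀, map_add, map_pow, map_ofNat, map_intCast, map_one, ht2, hσA]
        have e2 : σ (σ z) = (-θ - t2 - 1) * A / 3 := by rw [e1]; simp only [map_mul, map_neg, map_sub, map_div₀, map_add, map_pow, map_ofNat, map_intCast, map_one, ht3, hσA]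
        rw [e2, e1, hz]
        push_cast
        rw [hmk] at hsum2 hA2 ⊢
        linear_combination (-A ^ 2 / 9) * hsum2 + ((1 + 3 * k) / 3 : L) * hA2)
      have h3D : (3 : 𝓞 L) ∈ D := by
        have h1 : 3 * Θ ∈ D := by
          have := D.add_mem (hmem Θ) (hmem2 Θ)
          convert this using 1
          linear_combination hsΘ
        have := D.mul_mem_left (s Θ * s (s Θ)) h1
        convert this using 1
        linear_combination (-3) * hNΘ
      rw [Ideal.eq_top_iff_one]
      have h1 : ((-(4 * m ^ 3 + 1) * (1 + 3 * k) : ℤ) : 𝓞 L) ∈ D := by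
        rw [← hsZ]
        have e1 := D.mul_mem_left (-Z - s (s Z)) (hmem Z)
        have e2 := D.mul_mem_left (- 2 * Z) (hmem2 Z)
        have e3 := D.mul_mem_left (Z ^ 2) h3D
        convert D.add_mem (D.add_mem e1 e2) e3 using 1
        ring
      have h2 := D.mul_mem_left ((36 * k ^ 3 * (1 + 3 * k) + k : ℤ) : 𝓞 L) h3D
      convert D.sub_mem (D.neg_mem h1) h2 using 1
      rw [hk]; push_cast; ring)
    (classNumber K) hndvd
    (cl_pow K)
    hunits Θ
    (by
      intro h
      have h' := congrArg (fun x : 𝓞 L => (x : L)) h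
      simp only [map_mul, map_sub, hs, hΘ, map_zero] at h'
      rw [← ht2, ht3] at h'
      apply hN
      have e : g * (θ ^ 2 + m) = 4 * m ^ 3 + 1 := by
        rw [hg]; linear_combination (2 * m * θ + 1) * hθ
      have e2 : (3 : L) * (θ ^ 2 + m) = 0 := by linear_combination h' + hsum2
      have e3 := (mul_eq_zero.mp e2).resolve_left three_ne_zero
      rw [← e, e3, mul_zero])
  have hpow : ∀ n : ℕ, ∃ t : 𝓞 L, Θ = t ^ 3 ^ n ∧ t * s t * s (s t) = 1 := by
    intro n
    induction n with
    | zero => exact ⟨Θ, by simp, hNΘ⟩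
    | succ n ih =>
      obtain ⟨t, ht, hnt⟩ := ih
      obtain ⟨t', ht', hnt'⟩ := hcube t hnt
      exact ⟨t', by rw [ht, ht', ← pow_mul, pow_succ, mul_comm], hnt'⟩
  let U : (𝓞 L)ˣ := Units.mkOfMulEqOne Θ (s Θ * s (s Θ)) (by rw [← hNΘ]; ring)
  obtain ⟨n, hn, hUn⟩ := unit_div U (fun n => by
    obtain ⟨t, ht, hnt⟩ := hpow n
    refine ⟨Units.mkOfMulEqOne t (s t * s (s t)) (by rw [← hnt]; ring), ?_⟩
    ext
    simp [U, ← ht])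
  apply htor n hn
  have := congrArg (fun x : (𝓞 L)ˣ => ((x : 𝓞 L) : L)) hUn
  simpa [U, hΘ] using this
end
section
open Polynomial

theorem no_int_root (m : ℤ) (hm : 0 < m) (x : ℤ) (hx : x ^ 3 + 3 * m * x - 1 = 0) : False := by
  have h : x * (x ^ 2 + 3 * m) = 1 := by linear_combination hx
  have hpos : 0 < x ^ 2 + 3 * m := by positivity
  rcases Int.eq_one_or_neg_one_of_mul_eq_one h with rfl | rfl
  · omega
  · omega

theorem irredQ (m : ℤ) (hm : 0 < m) : Irreducible (X ^ 3 + C (3 * (m : ℚ)) * X - C 1 : ℚ[X]) := by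
  have hdeg : (X ^ 3 + C (3 * (m : ℚ)) * X - C 1 : ℚ[X]).natDegree = 3 := by compute_degree!
  rw [irreducible_iff_roots_eq_zero_of_degree_le_three (by rw [hdeg]; norm_num) (by rw [hdeg])]
  rw [Multiset.eq_zero_iff_forall_notMem]
  intro q hq
  have hq' := isRoot_of_mem_roots hq
  simp only [IsRoot, eval_sub, eval_add, eval_mul, eval_pow, eval_X, eval_C] at hq'
  have hqi : IsIntegral ℤ q := by
    refine ⟨X ^ 3 + C (3 * m) * X - C 1, by monicity!, ?_⟩
    simp only [eval₂_add, eval₂_sub, eval₂_mul, eval₂_pow, eval₂_X, eval₂_C]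
    simp only [eq_intCast]
    push_cast
    exact hq'
  obtain ⟨x, rfl⟩ := IsIntegrallyClosed.isIntegral_iff.mp hqi
  rw [eq_intCast] at hq'
  exact no_int_root m hm x (by exact_mod_cast hq')

theorem irredK (m : ℤ) (hm : 0 < m) (K : Type*) [Field K] [NumberField K]
    (hdeg : Module.finrank ℚ K = 2) : Irreducible (X ^ 3 + C (3 * (m : K)) * X - C 1 : K[X]) := by
  have hd : (X ^ 3 + C (3 * (m : K)) * X - C 1 : K[X]).natDegree = 3 := by compute_degree!
  rw [irreducible_iff_roots_eq_zero_of_degree_le_three (by rw [hd]; norm_num) (by rw [hd])]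
  rw [Multiset.eq_zero_iff_forall_notMem]
  intro q hq
  have hq' := isRoot_of_mem_roots hq
  simp only [IsRoot, eval_sub, eval_add, eval_mul, eval_pow, eval_X, eval_C] at hq'
  have h1 := minpoly.eq_of_irreducible_of_monic (irredQ m hm) (x := q) (by
    simp only [map_sub, map_add, map_mul, map_pow, aeval_X, aeval_C, map_ofNat, map_intCast, map_one]
    exact hq') (by monicity!)
  have h2 := minpoly.natDegree_le (A := ℚ) q
  rw [← h1, hdeg] at h2
  have h3 : (X ^ 3 + C (3 * (m : ℚ)) * X - C 1 : ℚ[X]).natDegree = 3 := by compute_degree!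
  omega

theorem real_root (m : ℤ) (hm : 0 < m) : ∃ r : ℝ, 0 < r ∧ r < 1 ∧ r ^ 3 + 3 * m * r - 1 = 0 := by
  have hm' : (0 : ℝ) < m := by exact_mod_cast hm
  have hc : ContinuousOn (fun r : ℝ => r ^ 3 + 3 * m * r - 1) (Set.Icc 0 1) := by fun_prop
  obtain ⟨r, ⟨h0, h1⟩, hr⟩ := intermediate_value_Ioo (by norm_num) hc
    (show (0 : ℝ) ∈ Set.Ioo _ _ from ⟨by norm_num, by simp only [one_pow, mul_one]; linarith⟩)
  exact ⟨r, h0, h1, hr⟩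
end

/-- Let `m` be an odd positive integer with `m ≡ 0 (mod 3)`.  Then `3` divides the class
number of the imaginary quadratic field `ℚ(√(-3 * (4 * m ^ 3 + 1)))`. -/
theorem class_number_div_three_of_sqrt_neg_three_mul_four_cube_add_one
    (m : ℤ) (hm : 0 < m) (hmodd : Odd m) (hm3 : 3 ∣ m)
    (K : Type*) [Field K] [NumberField K] (hdeg : Module.finrank ℚ K = 2)
    (hsqrt : ∃ α : K, α ^ 2 = -3 * (4 * (m : K) ^ 3 + 1)) :
    3 ∣ NumberField.classNumber K := by
  obtain ⟨k, hk⟩ := hm3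
  obtain ⟨α, hα⟩ := hsqrt
  have hirr := irredK m hm K hdeg
  set f : Polynomial K := Polynomial.X ^ 3 + Polynomial.C (3 * (m : K)) * Polynomial.X - Polynomial.C 1 with hf
  have hfm : f.Monic := by rw [hf]; monicity!
  have hfd : f.natDegree = 3 := by rw [hf]; compute_degree!
  have : Fact (Irreducible f) := ⟨hirr⟩
  have : CharZero (AdjoinRoot f) := charZero_of_injective_algebraMap (algebraMap K (AdjoinRoot f)).injective
  have hfin : Module.Finite K (AdjoinRoot f) := hfm.finite_adjoinRoot
  have : NumberField (AdjoinRoot f) :=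
    { to_charZero := inferInstance
      to_finiteDimensional := Module.Finite.trans (R := ℚ) K (AdjoinRoot f) }
  have hθ : AdjoinRoot.root f ^ 3 + 3 * m * AdjoinRoot.root f - 1 = 0 := by
    have h := AdjoinRoot.eval₂_root f
    conv at h => lhs; arg 3; rw [hf]
    simp only [Polynomial.eval₂_add, Polynomial.eval₂_sub, Polynomial.eval₂_mul, Polynomial.eval₂_pow, Polynomial.eval₂_X, Polynomial.eval₂_C] at h
    simpa only [map_mul, map_ofNat, map_intCast, map_one] using h
  have hN : (4 * (m : AdjoinRoot f) ^ 3 + 1) ≠ 0 := by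
    have : (4 * m ^ 3 + 1 : ℤ) ≠ 0 := by positivity
    exact_mod_cast this
  set θ := AdjoinRoot.root f with hθdef
  set A := algebraMap K (AdjoinRoot f) α with hA
  have hA2 : A ^ 2 = -3 * (4 * (m : AdjoinRoot f) ^ 3 + 1) := by
    rw [hA, ← map_pow, hα]
    simp only [map_mul, map_neg, map_add, map_pow, map_ofNat, map_intCast, map_one]
  set g : AdjoinRoot f := 2 * m * θ ^ 2 + θ + 4 * m ^ 2 with hg
  set B : AdjoinRoot f := A * g / (4 * m ^ 3 + 1) with hB
  have hBN : B * (4 * m ^ 3 + 1) = A * g := by rw [hB]; field_simp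
  have hAB : A * B = -3 * g := by
    apply mul_right_cancel₀ hN
    linear_combination A * hBN + g * hA2
  have hg2 : g ^ 2 = (4 * m ^ 3 + 1) * (θ ^ 2 + 4 * m) := by
    rw [hg]; linear_combination (4 * m ^ 2 * θ + 4 * m) * hθ
  have hB2 : B ^ 2 = -3 * θ ^ 2 - 12 * m := by
    apply mul_right_cancel₀ hN
    linear_combination B * hBN + g * hAB - 3 * hg2
  have hroot2 : ((-θ + B) / 2) ^ 3 + 3 * m * ((-θ + B) / 2) - 1 = 0 := by
    linear_combination hθ + ((B - 3 * θ) / 8) * hB2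
  let σ : AdjoinRoot f →ₐ[K] AdjoinRoot f := AdjoinRoot.liftAlgHom f (Algebra.ofId K _) ((-θ + B) / 2) (by
    conv => lhs; arg 3; rw [hf]
    simp only [Polynomial.eval₂_add, Polynomial.eval₂_sub, Polynomial.eval₂_mul, Polynomial.eval₂_pow, Polynomial.eval₂_X, Polynomial.eval₂_C]
    simpa only [map_mul, map_ofNat, map_intCast, map_one] using hroot2)
  refine core m k hm hk K (AdjoinRoot f) α hα (K_units m hm K hdeg α hα) θ hθ ?_ ?_ σ ?_
  · intro x
    let pb := AdjoinRoot.powerBasis' hfm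
    have hpd : pb.dim = 3 := by rw [AdjoinRoot.powerBasis'_dim, hfd]
    have hpg : pb.gen = θ := AdjoinRoot.powerBasis'_gen hfm
    obtain ⟨p, hp, hx⟩ := pb.exists_eq_aeval x
    rw [hpd] at hp
    refine ⟨p.coeff 0, p.coeff 1, p.coeff 2, ?_⟩
    rw [hx, hpg, Polynomial.aeval_eq_sum_range' hp]
    simp [Finset.sum_range_succ, Algebra.smul_def]
  · intro n hn hcon
    obtain ⟨r, h0, h1, hr⟩ := real_root m hm
    obtain ⟨φ⟩ : Nonempty (K →+* ℂ) := inferInstance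
    let ψ : AdjoinRoot f →+* ℂ := AdjoinRoot.lift φ (r : ℂ) (by
      conv => lhs; arg 3; rw [hf]
      simp only [Polynomial.eval₂_add, Polynomial.eval₂_sub, Polynomial.eval₂_mul, Polynomial.eval₂_pow, Polynomial.eval₂_X, Polynomial.eval₂_C]
      simp only [map_mul, map_ofNat, map_intCast, map_one]
      exact_mod_cast hr)
    have hψ : ψ θ = r := AdjoinRoot.lift_root _
    have h2 := congrArg ψ hcon
    rw [map_pow, map_one, hψ] at h2
    have h3 : r ^ n = 1 := by exact_mod_cast h2
    exact absurd h3 (pow_lt_one₀ h0.le h1 hn.ne').ne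
  · exact AdjoinRoot.liftAlgHom_root _ _ _ _
end

section
/- Let m be an odd positive integer with m ≡ 4 (mod 15), and let n ≥ 3 be an odd integer. Then 3 divides the class number of the real quadratic field ℚ(√(3(2m^{3n} − 1))). -/
section
open NumberField

theorem auxA {E : Type*} [AddCommGroup E] [Module.Finite ℤ E] (σ f N : E →+ E)
    (hσ : ∀ x, σ (σ (σ x)) = x) (hf : ∀ x, f x = σ x - x) (hN : ∀ x, N x = x + σ x + σ (σ x))
    (htors : ∀ x, N x = 0 → ∀ k : ℕ, k ≠ 0 → k • x = 0 → x = 0)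
    (h0 : (f.ker.map (nsmulAddMonoidHom (α := E) 3)).relIndex f.ker ≠ 0)
    (h3 : (f.ker.map (nsmulAddMonoidHom (α := E) 3)).relIndex f.ker ≤ 3)
    (hrank : 3 ≤ Module.finrank ℤ N.ker) :
    ∃ x, N x = 0 ∧ ∀ y, x ≠ f y := by
  by_contra! hcon
  set M := N.ker with hM
  set G := f.ker with hG
  have hfM : f.range = M := by
    ext x
    simp only [hM, AddMonoidHom.mem_range, AddMonoidHom.mem_ker]
    constructor
    · rintro ⟨y, rfl⟩
      simp only [hN, hf, map_sub, hσ]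
      abel
    · intro h
      obtain ⟨y, hy⟩ := hcon x h
      exact ⟨y, hy.symm⟩
  have hNG : ∀ x, N x ∈ G := by
    intro x
    simp only [hG, AddMonoidHom.mem_ker, hN, hf, map_add, hσ]
    abel
  have hGσ : ∀ x ∈ G, σ x = x := by
    intro x hx
    rw [hG, AddMonoidHom.mem_ker, hf, sub_eq_zero] at hx
    exact hx
  -- first index
  have hle : (G.map (nsmulAddMonoidHom (α := E) 3)).comap N ≤ M ⊔ G := by
    intro u hu
    obtain ⟨v, hv, hvu⟩ := hu
    rw [AddSubgroup.mem_sup]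
    refine ⟨u - v, ?_, v, hv, by abel⟩
    rw [hM, AddMonoidHom.mem_ker, map_sub, ← hvu, hN v, hGσ v hv, hGσ v hv]
    simp only [nsmulAddMonoidHom_apply]
    abel
  have hNr : N.range ≤ G := by
    rintro _ ⟨x, rfl⟩
    exact hNG x
  have hi0 : ((G.map (nsmulAddMonoidHom (α := E) 3)).comap N).index ≠ 0 := by
    rw [AddSubgroup.index_comap]
    exact fun h => h0 (AddSubgroup.relIndex_eq_zero_of_le_right hNr h)
  have hi3 : ((G.map (nsmulAddMonoidHom (α := E) 3)).comap N).index ≤ 3 := by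
    rw [AddSubgroup.index_comap]
    exact (AddSubgroup.relIndex_le_of_le_right hNr h0).trans h3
  have hd := AddSubgroup.index_dvd_of_le hle
  have hj0 : (M ⊔ G).index ≠ 0 := fun h => hi0 (by rw [h] at hd; exact zero_dvd_iff.1 hd)
  have hj3 : (M ⊔ G).index ≤ 3 := (Nat.le_of_dvd (Nat.pos_of_ne_zero hi0) hd).trans hi3
  have e1 : (M.map f).relIndex M = (M ⊔ G).index := by
    conv_lhs => rw [← hfM, AddMonoidHom.range_eq_map, AddSubgroup.relIndex_map_map]
    rw [top_sup_eq, AddSubgroup.relIndex_top_right, ← AddMonoidHom.range_eq_map, hfM]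
  have hfMM : M.map f ≤ M := by
    rw [← hfM]; exact AddSubgroup.map_le_range _ _
  have e2 : ((M.map f).map f).relIndex (M.map f) ∣ (M.map f).relIndex M := by
    rw [AddSubgroup.relIndex_map_map]
    have : M ⊔ f.ker = M ⊔ (M.map f ⊔ f.ker) := by
      rw [← sup_assoc, sup_eq_left.2 hfMM]
    rw [this, AddSubgroup.relIndex_sup_right]
    exact AddSubgroup.relIndex_dvd_of_le_left _ le_sup_left
  have e3 : (M.map f).map f = M.map (nsmulAddMonoidHom (α := E) 3) := by
    have key : ∀ x ∈ M, f (f x) = - (3 • σ x) := by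
      intro x hx
      rw [hM, AddMonoidHom.mem_ker, hN] at hx
      have : σ (σ x) = - x - σ x := by
        rw [← sub_eq_zero, ← hx]; abel
      simp only [hf, map_sub, this]
      abel
    have hMσ : ∀ x ∈ M, σ x ∈ M := by
      intro x hx
      rw [hM, AddMonoidHom.mem_ker, hN] at hx ⊢
      rw [hσ, ← hx]; abel
    ext z
    constructor
    · rintro ⟨_, ⟨x, hx, rfl⟩, rfl⟩
      exact ⟨-σ x, M.neg_mem (hMσ x hx), by rw [key x hx]; simp⟩
    · rintro ⟨x, hx, rfl⟩
      refine ⟨f (-σ (σ x)), ⟨_, M.neg_mem (hMσ _ (hMσ x hx)), rfl⟩, ?_⟩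
      rw [key _ (M.neg_mem (hMσ _ (hMσ x hx)))]
      simp [hσ]
  have : Module.Finite ℤ ↥M.toIntSubmodule := inferInstance
  have : IsAddTorsionFree ↥M.toIntSubmodule := by
    refine ⟨fun k hk x y hxy => ?_⟩
    have := htors (x - y : M.toIntSubmodule).1 (x - y).2 k hk ?_
    · exact sub_eq_zero.1 (Subtype.ext this)
    · have h2 : k • (x - y) = 0 := by
        rw [smul_sub, sub_eq_zero]; exact hxy
      exact congrArg Subtype.val h2
  have : Module.Free ℤ ↥M.toIntSubmodule := inferInstance
  have e4 := AddSubgroup.relIndex_map_nsmul 3 M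
  have e5 := AddSubgroup.relIndex_mul_relIndex _ _ _ (AddSubgroup.map_mono hfMM : (M.map f).map f ≤ M.map f) hfMM
  rw [e3, e4, ← e3] at e5
  rw [e1] at e5 e2
  have h6 := Nat.le_of_dvd (Nat.pos_of_ne_zero hj0) e2
  have : 3 ^ 3 ≤ 3 ^ Module.finrank ℤ M := Nat.pow_le_pow_right (by norm_num) hrank
  rw [← e5] at this
  have h7 := Nat.mul_le_mul (h6.trans hj3) hj3
  omega

theorem auxB {R S : Type*} [CommRing R] [IsDedekindDomain R] [CommRing S] [IsDomain S] [Algebra R S]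
    [Module.FaithfullyFlat R S] (τ : S ≃ₐ[R] S) (h3 : ∀ x, τ (τ (τ x)) = x)
    (hfix : ∀ x, τ x = x → ∃ r : R, algebraMap R S r = x) (x₀ : S) (hx₀ : τ x₀ ≠ x₀)
    (hJ : Ideal.span (Set.range fun y : S => y - τ y) = ⊤)
    (ε : Sˣ) (hε : (ε : S) * τ ε * τ (τ ε) = 1)
    (hne : ∀ η : Sˣ, (ε : S) * τ η ≠ η) :
    ∃ I : Ideal R, I ≠ ⊥ ∧ ¬ I.IsPrincipal ∧ (I ^ 3).IsPrincipal := by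
  -- Hilbert 90
  obtain ⟨a, ha0, ha⟩ : ∃ a : S, a ≠ 0 ∧ (ε : S) * τ a = a := by
    by_contra! hcon
    have hT : ∀ c : S, c + ε * τ c + ε * τ ε * τ (τ c) = 0 := by
      intro c
      by_contra hc
      apply hcon _ hc
      simp only [map_add, map_mul, h3]
      linear_combination c * hε
    have h1 : ∀ c, τ c * (τ x₀ - x₀) + τ ε * τ (τ c) * (τ (τ x₀) - x₀) = 0 := by
      intro c
      have h := hT (x₀ * c)
      have h' := hT c
      simp only [map_mul] at h
      have : (ε : S) * (τ c * (τ x₀ - x₀) + τ ε * τ (τ c) * (τ (τ x₀) - x₀)) = 0 := by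
        linear_combination h - x₀ * h'
      exact (mul_eq_zero.1 this).resolve_left ε.ne_zero
    have h2 := h1 x₀
    have h4 := h1 1
    simp only [map_one] at h4
    have h5 : τ ε * ((τ (τ x₀) - τ x₀) * (τ (τ x₀) - x₀)) = 0 := by
      linear_combination h2 - τ x₀ * h4
    rcases mul_eq_zero.1 h5 with h | h
    · exact ε.ne_zero ((map_eq_zero_iff τ τ.injective).1 h)
    rcases mul_eq_zero.1 h with h | h
    · exact hx₀ (τ.injective (sub_eq_zero.1 h))
    · have := congrArg τ (sub_eq_zero.1 h)
      rw [h3] at this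
      exact hx₀ this.symm
  -- separating elements
  obtain ⟨ι, _, x, y, hxy1, hxy0⟩ : ∃ (ι : Type _) (_ : Fintype ι) (x y : ι → S),
      ∑ i, x i * y i = 1 ∧ ∑ i, x i * τ (y i) = 0 := by
    have h1 : (1 : S) ∈ Ideal.span (Set.range fun y : S => y - τ y) := by rw [hJ]; trivial
    rw [Finsupp.mem_ideal_span_range_iff_exists_finsupp] at h1
    obtain ⟨c, hc⟩ := h1
    refine ⟨Option c.support, inferInstance, fun o => o.elim (-∑ i : c.support, c i * τ (i : S)) (fun i => c i),
      fun o => o.elim 1 (fun i => (i : S)), ?_, ?_⟩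
    · rw [Fintype.sum_option]
      simp only [Option.elim]
      have e1 := Finset.sum_coe_sort c.support (fun i => c i * τ i)
      have e2 := Finset.sum_coe_sort c.support (fun i => c i * i)
      rw [e1, e2, mul_one, ← hc, Finsupp.sum]
      simp only [mul_sub, Finset.sum_sub_distrib]
      ring
    · rw [Fintype.sum_option]
      simp
  have hxy2 : ∑ i, y i * τ (τ (x i)) = 0 := by
    have := congrArg (fun z => τ (τ z)) hxy0
    simp only [map_sum, map_mul, h3, map_zero] at this
    rw [← this]
    exact Finset.sum_congr rfl fun i _ => mul_comm _ _
  have tr : ∀ z : S, ∃ r : R, algebraMap R S r = z + τ z + τ (τ z) := by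
    intro z
    apply hfix
    simp only [map_add, h3]
    ring
  set I : Ideal S := Ideal.span {a} with hI
  have hεa : ∀ z ∈ I, τ z ∈ I := by
    intro z hz
    rw [hI, Ideal.mem_span_singleton] at hz ⊢
    obtain ⟨w, rfl⟩ := hz
    rw [map_mul]
    have : τ a = a * ((ε⁻¹ : Sˣ) : S) := by
      nth_rewrite 2 [← ha]
      rw [mul_comm, ← mul_assoc, Units.inv_mul, one_mul]
    rw [this, mul_assoc]
    exact dvd_mul_right _ _
  have hmap : (I.comap (algebraMap R S)).map (algebraMap R S) = I := by
    apply le_antisymm Ideal.map_comap_le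
    intro z hz
    -- z = ∑ x_i y_j Tr (y_i x_j z)
    have hz' : z = ∑ i, ∑ j, (x i * y j) * ((y i * x j * z) + τ (y i * x j * z) + τ (τ (y i * x j * z))) := by
      have : ∀ i j, (x i * y j) * ((y i * x j * z) + τ (y i * x j * z) + τ (τ (y i * x j * z)))
          = (x i * y i) * (x j * y j) * z + (x i * τ (y i)) * (y j * τ (x j)) * τ z
            + (x i * τ (τ (y i))) * (y j * τ (τ (x j))) * τ (τ z) := by
        intro i j
        simp only [map_mul]
        ring
      simp only [this, Finset.sum_add_distrib, ← Finset.sum_mul, ← Finset.mul_sum, hxy1, hxy0, hxy2]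
      ring
    rw [hz']
    refine Ideal.sum_mem _ fun i _ => Ideal.sum_mem _ fun j _ => Ideal.mul_mem_left _ _ ?_
    obtain ⟨r, hr⟩ := tr (y i * x j * z)
    rw [← hr]
    apply Ideal.mem_map_of_mem
    rw [Ideal.mem_comap, hr]
    have h1 : y i * x j * z ∈ I := Ideal.mul_mem_left _ _ hz
    exact I.add_mem (I.add_mem h1 (hεa _ h1)) (hεa _ (hεa _ h1))
  have hinj : Function.Injective (algebraMap R S) := FaithfulSMul.algebraMap_injective R S
  refine ⟨I.comap (algebraMap R S), ?_, ?_, ?_⟩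
  · intro h
    rw [h, Ideal.map_bot] at hmap
    rw [hI] at hmap
    exact ha0 (Ideal.span_singleton_eq_bot.1 hmap.symm)
  · rintro ⟨b, hb⟩
    have hb' : I.comap (algebraMap R S) = Ideal.span {b} := hb
    rw [hb', Ideal.map_span, Set.image_singleton, hI, Ideal.span_singleton_eq_span_singleton] at hmap
    obtain ⟨η, hη⟩ := hmap
    apply hne η
    rw [← hη] at ha
    have hb0 : algebraMap R S b ≠ 0 := by
      intro h0; rw [h0, zero_mul] at hη; exact ha0 hη.symm
    rw [map_mul, AlgEquiv.commutes] at ha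
    apply mul_left_cancel₀ hb0
    linear_combination ha
  · obtain ⟨r, hr⟩ : ∃ r : R, algebraMap R S r = a * τ a * τ (τ a) := by
      apply hfix
      simp only [map_mul, h3]
      ring
    refine ⟨r, ?_⟩
    change _ = Ideal.span {r}
    rw [← Ideal.comap_map_eq_self_of_faithfullyFlat (B := S) (I.comap (algebraMap R S) ^ 3), 
      ← Ideal.comap_map_eq_self_of_faithfullyFlat (B := S) (Ideal.span {r})]
    congr 1
    rw [Ideal.map_pow, hmap, hI, Ideal.map_span, Set.image_singleton, hr, Ideal.span_singleton_pow,
      Ideal.span_singleton_eq_span_singleton]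
    refine ⟨(ε⁻¹) ^ 2 * (Units.map (τ : S →* S) ε)⁻¹, ?_⟩
    have h1 : (ε : S) ^ 2 * τ ε * (a * τ a * τ (τ a)) = a ^ 3 := by
      have h2 : τ ε * τ (τ a) = τ a := by rw [← map_mul, ha]
      calc (ε : S) ^ 2 * τ ε * (a * τ a * τ (τ a)) = a * (ε * τ a) * (ε * (τ ε * τ (τ a))) := by ring
        _ = a ^ 3 := by rw [h2, ha]; ring
    rw [← h1]
    have : (ε : S) ^ 2 * τ ε = ((ε ^ 2 * Units.map (τ : S →* S) ε : Sˣ) : S) := by simp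
    rw [this, mul_right_comm, ← Units.val_mul]
    have h9 : ε ^ 2 * (Units.map (τ : S →* S) ε) * (ε⁻¹ ^ 2 * (Units.map (τ : S →* S) ε)⁻¹) = 1 := by
      rw [inv_pow, mul_mul_mul_comm]; simp
    rw [h9, Units.val_one, one_mul]
theorem aux_rank (K : Type*) [Field K] [NumberField K] [IsTotallyReal K] :
    Units.rank K = Module.finrank ℚ K - 1 := by
  rw [Units.rank, IsTotallyReal.finrank, InfinitePlace.card_eq_nrRealPlaces_add_nrComplexPlaces,
    IsTotallyReal.nrComplexPlaces_eq_zero, add_zero]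

theorem aux_torsion (K : Type*) [Field K] [NumberField K] [IsTotallyReal K] (x : (𝓞 K)ˣ)
    (hx : x ∈ Units.torsion K) : x = 1 ∨ x = -1 := by
  have hpos : 0 < InfinitePlace.nrRealPlaces K := by
    rw [← IsTotallyReal.finrank]; exact Module.finrank_pos
  by_cases! hc : 2 < orderOf x
  · rw [← orderOf_units] at hc
    have h : IsPrimitiveRoot (x : K) (orderOf (x : 𝓞 K)) := by
      have := (IsPrimitiveRoot.orderOf (x : 𝓞 K)).map_of_injective
        (f := algebraMap (𝓞 K) K) RingOfIntegers.coe_injective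
      exact this
    have := NumberField.InfinitePlace.IsPrimitiveRoot.nrRealPlaces_eq_zero_of_two_lt hc h
    omega
  · have h1 : 0 < orderOf x := orderOf_pos_iff.2 ((CommGroup.mem_torsion x).1 hx)
    have h2 : x ^ 2 = 1 := by
      interval_cases hi : orderOf x
      · rw [orderOf_eq_one_iff.1 hi]; simp
      · rw [← hi]; exact pow_orderOf_eq_one x
    have h3 : (x : 𝓞 K) ^ 2 = 1 := by
      have := congrArg Units.val h2
      simpa using this
    rcases eq_or_eq_neg_of_sq_eq_sq (x : 𝓞 K) 1 (by rw [h3, one_pow]) with h | h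
    · left; exact Units.ext h
    · right; exact Units.ext (by simpa using h)

theorem aux_index (K : Type*) [Field K] [NumberField K] [IsTotallyReal K]
    (h2 : Module.finrank ℚ K = 2) :
    (nsmulAddMonoidHom (α := Additive (𝓞 K)ˣ) 3).range.index ≠ 0 ∧
    (nsmulAddMonoidHom (α := Additive (𝓞 K)ˣ) 3).range.index ≤ 3 := by
  have hr : Units.rank K = 1 := by rw [aux_rank, h2]
  set H := (nsmulAddMonoidHom (α := Additive (𝓞 K)ˣ) 3).range
  let i0 : Fin (Units.rank K) := ⟨0, by omega⟩
  let u := Units.fundSystem K i0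
  have hsurj : Function.Surjective (fun k : Fin 3 =>
      (QuotientAddGroup.mk (Additive.ofMul (u ^ (k : ℕ))) : Additive (𝓞 K)ˣ ⧸ H)) := by
    intro q
    obtain ⟨x, rfl⟩ := QuotientAddGroup.mk_surjective q
    obtain ⟨⟨ζ, e⟩, hx, -⟩ := Units.exist_unique_eq_mul_prod K x.toMul
    simp only at hx
    have hprod : ∏ i, Units.fundSystem K i ^ e i = u ^ (e i0) := by
      have : Subsingleton (Fin (Units.rank K)) := by rw [hr]; infer_instance
      exact Fintype.prod_subsingleton _ i0
    rw [hprod] at hx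
    have hζ : (ζ : (𝓞 K)ˣ) ^ 3 = ζ := by
      rcases aux_torsion K ζ ζ.2 with h | h <;> rw [h] <;> norm_num
    refine ⟨⟨(e i0 % 3).toNat, by omega⟩, ?_⟩
    rw [QuotientAddGroup.eq]
    refine ⟨Additive.ofMul (ζ * u ^ (e i0 / 3)), ?_⟩
    rw [nsmulAddMonoidHom_apply]
    apply Additive.toMul.injective
    simp only [toMul_nsmul, toMul_add, toMul_neg, toMul_ofMul]
    rw [hx, mul_pow, hζ, ← zpow_natCast u, Int.toNat_of_nonneg (by omega), ← zpow_natCast,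
      ← zpow_mul, eq_inv_mul_iff_mul_eq, mul_left_comm, ← zpow_add]
    congr 2
    push_cast
    omega
  have hfin : Finite (Additive (𝓞 K)ˣ ⧸ H) := Finite.of_surjective _ hsurj
  refine ⟨?_, ?_⟩
  · rw [AddSubgroup.index]
    exact Nat.card_pos.ne'
  · rw [AddSubgroup.index]
    simpa using Nat.card_le_card_of_surjective _ hsurj

theorem auxC {K L : Type*} [Field K] [NumberField K] [Field L] [NumberField L] [Algebra K L]
    [IsTotallyReal K] [IsTotallyReal L] (hK : Module.finrank ℚ K = 2) (hL : Module.finrank ℚ L = 6)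
    (τ : 𝓞 L ≃ₐ[𝓞 K] 𝓞 L) (h3 : ∀ x, τ (τ (τ x)) = x)
    (hfix : ∀ x, τ x = x → ∃ r : 𝓞 K, algebraMap (𝓞 K) (𝓞 L) r = x)
    (x₀ : 𝓞 L) (hx₀ : τ x₀ ≠ x₀)
    (hJ : Ideal.span (Set.range fun y : 𝓞 L => y - τ y) = ⊤) :
    3 ∣ NumberField.classNumber K := by
  let s : (𝓞 L)ˣ →* (𝓞 L)ˣ := Units.map (τ : 𝓞 L →* 𝓞 L)
  have hs : ∀ u, ((s u : (𝓞 L)ˣ) : 𝓞 L) = τ u := fun u => rfl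
  let σ : Additive (𝓞 L)ˣ →+ Additive (𝓞 L)ˣ := MonoidHom.toAdditive s
  have hσ : ∀ x, σ (σ (σ x)) = x := by
    intro x
    apply Additive.toMul.injective
    apply Units.ext
    exact h3 _
  let f := σ - AddMonoidHom.id _
  let N := AddMonoidHom.id _ + σ + σ.comp σ
  let ι : Additive (𝓞 K)ˣ →+ Additive (𝓞 L)ˣ :=
    MonoidHom.toAdditive (Units.map (algebraMap (𝓞 K) (𝓞 L) : 𝓞 K →* 𝓞 L))
  have hinj : Function.Injective (algebraMap (𝓞 K) (𝓞 L)) := FaithfulSMul.algebraMap_injective _ _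
  have hιinj : Function.Injective ι := by
    intro x y hxy
    apply Additive.toMul.injective
    exact Units.map_injective hinj (congrArg Additive.toMul hxy)
  have hker : f.ker = ι.range := by
    ext x
    rw [AddMonoidHom.mem_ker]
    have : f x = 0 ↔ τ (x.toMul : 𝓞 L) = (x.toMul : 𝓞 L) := by
      change σ x - x = 0 ↔ _
      rw [sub_eq_zero]
      constructor
      · intro h
        exact congrArg (fun z : Additive (𝓞 L)ˣ => (z.toMul : 𝓞 L)) h
      · intro h
        apply Additive.toMul.injective
        exact Units.ext h
    rw [this]
    constructor
    · intro h
      obtain ⟨r, hr⟩ := hfix _ h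
      have h' : τ ((x.toMul⁻¹ : (𝓞 L)ˣ) : 𝓞 L) = ((x.toMul⁻¹ : (𝓞 L)ˣ) : 𝓞 L) := by
        have e : s x.toMul = x.toMul := Units.ext h
        have : s (x.toMul⁻¹) = x.toMul⁻¹ := by rw [map_inv, e]
        exact congrArg Units.val this
      obtain ⟨r', hr'⟩ := hfix _ h'
      have hrr : r * r' = 1 := by
        apply hinj
        rw [map_mul, hr, hr', Units.mul_inv, map_one]
      refine ⟨Additive.ofMul ⟨r, r', hrr, by rw [mul_comm]; exact hrr⟩, ?_⟩
      apply Additive.toMul.injective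
      exact Units.ext hr
    · rintro ⟨y, rfl⟩
      exact τ.commutes _
  have hidx := aux_index K hK
  have hrel : (f.ker.map (nsmulAddMonoidHom (α := Additive (𝓞 L)ˣ) 3)).relIndex f.ker =
      (nsmulAddMonoidHom (α := Additive (𝓞 K)ˣ) 3).range.index := by
    have : f.ker.map (nsmulAddMonoidHom (α := Additive (𝓞 L)ˣ) 3) =
        (nsmulAddMonoidHom (α := Additive (𝓞 K)ˣ) 3).range.map ι := by
      rw [hker, AddMonoidHom.range_eq_map, AddMonoidHom.range_eq_map, AddSubgroup.map_map,
        AddSubgroup.map_map]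
      congr 1
      ext x
      simp
    rw [this, hker, AddMonoidHom.range_eq_map ι, AddSubgroup.relIndex_map_map_of_injective _ _ hιinj,
      AddSubgroup.relIndex_top_right]
  have hNker : ∀ x, N x = 0 → ((x.toMul : (𝓞 L)ˣ) : 𝓞 L) * τ x.toMul * τ (τ x.toMul) = 1 := by
    intro x hx
    exact congrArg (fun z : Additive (𝓞 L)ˣ => (z.toMul : 𝓞 L)) hx
  have htors : ∀ x, N x = 0 → ∀ k : ℕ, k ≠ 0 → k • x = 0 → x = 0 := by
    intro x hx k hk hkx
    have ht : x.toMul ∈ Units.torsion L := by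
      refine (CommGroup.mem_torsion _).2 ?_
      rw [isOfFinOrder_iff_pow_eq_one]
      exact ⟨k, Nat.pos_of_ne_zero hk, congrArg Additive.toMul hkx⟩
    apply Additive.toMul.injective
    rcases aux_torsion L _ ht with h | h
    · exact h
    · exfalso
      have := hNker x hx
      rw [h] at this
      simp at this
      have h2 : (2 : 𝓞 L) = 0 := by linear_combination -this
      exact two_ne_zero h2
  have hrank : 3 ≤ Module.finrank ℤ N.ker := by
    have e := Submodule.finrank_quotient_add_finrank (LinearMap.ker N.toIntLinearMap)
    rw [LinearEquiv.finrank_eq N.toIntLinearMap.quotKerEquivRange] at e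
    rw [Units.finrank_eq, aux_rank, hL] at e
    have hle : LinearMap.range N.toIntLinearMap ≤ LinearMap.range ι.toIntLinearMap := by
      rintro _ ⟨x, rfl⟩
      have : N x ∈ ι.range := by
        rw [← hker, AddMonoidHom.mem_ker]
        change σ (x + σ x + σ (σ x)) - (x + σ x + σ (σ x)) = 0
        simp only [map_add, hσ]
        abel
      exact this
    have h1 := Submodule.finrank_mono hle
    have h2 := LinearMap.finrank_range_of_inj (f := ι.toIntLinearMap) hιinj
    rw [h2, Units.finrank_eq, aux_rank, hK] at h1
    have : Module.finrank ℤ (LinearMap.ker N.toIntLinearMap) = Module.finrank ℤ N.ker := rfl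
    omega
  obtain ⟨x, hx, hxy⟩ := auxA σ f N hσ (fun _ => rfl) (fun _ => rfl) htors
    (by rw [hrel]; exact hidx.1) (by rw [hrel]; exact hidx.2) hrank
  obtain ⟨I, hI0, hI1, hI3⟩ := auxB τ h3 hfix x₀ hx₀ hJ x.toMul (hNker x hx) (by
    intro η hη
    apply hxy (-(Additive.ofMul η))
    change x = -(σ (Additive.ofMul η)) - -(Additive.ofMul η)
    have : x + σ (Additive.ofMul η) = Additive.ofMul η := by
      apply Additive.toMul.injective
      exact Units.ext hη
    rw [← sub_eq_zero]
    rw [← sub_eq_zero] at this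
    rw [← this]; abel)
  have hmem : I ∈ nonZeroDivisors (Ideal (𝓞 K)) := mem_nonZeroDivisors_of_ne_zero hI0
  have hord : orderOf (ClassGroup.mk0 ⟨I, hmem⟩) = 3 := by
    apply orderOf_eq_prime
    · rw [← map_pow, ClassGroup.mk0_eq_one_iff]
      exact hI3
    · rw [Ne, ClassGroup.mk0_eq_one_iff]
      exact hI1
  rw [NumberField.classNumber, ← hord]
  exact orderOf_dvd_card
open Polynomial in
theorem aux_integral {S : Type*} [CommRing S] (a b c : ℤ) (x : S)
    (h : x ^ 3 + a * x ^ 2 + b * x + c = 0) : IsIntegral ℤ x := by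
  refine ⟨X ^ 3 + C a * X ^ 2 + C b * X + C c, by monicity!, ?_⟩
  simp only [eval₂_add, eval₂_mul, eval₂_pow, eval₂_X, eval₂_C]
  simpa using h

theorem aux_sqrt_irrat (q : ℤ) (hqodd : Odd q) (r : ℚ) (h : r ^ 2 = 3 * (2 * (q : ℚ) ^ 3 - 1)) :
    False := by
  have hint : IsIntegral ℤ r := by
    apply aux_integral 0 (-(3 * (2 * q ^ 3 - 1))) 0
    push_cast
    linear_combination r * h
  obtain ⟨z, hz⟩ := IsIntegrallyClosed.isIntegral_iff.1 hint
  rw [eq_intCast] at hz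
  rw [← hz] at h
  have h' : z ^ 2 = 3 * (2 * q ^ 3 - 1) := by exact_mod_cast h
  obtain ⟨k, rfl⟩ := hqodd
  rcases Int.even_or_odd z with ⟨l, rfl⟩ | ⟨l, rfl⟩ <;> ring_nf at h' <;> omega

theorem aux_no_int_root (q : ℤ) (hq : q % 15 = 4) (z : ℤ)
    (h : z ^ 3 - 3 * q ^ 2 * z - 2 * (1 - q ^ 3) = 0) : False := by
  have hq5 : (q : ZMod 5) = 4 := by
    have : (q : ZMod 5) = ((4 : ℤ) : ZMod 5) := by
      rw [ZMod.intCast_eq_intCast_iff]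
      unfold Int.ModEq
      push_cast
      omega
    simpa using this
  have h5 := congrArg (Int.cast : ℤ → ZMod 5) h
  push_cast at h5
  rw [hq5] at h5
  revert h5
  generalize (z : ZMod 5) = w
  revert w
  decide

theorem aux_no_rat_root (q : ℤ) (hq : q % 15 = 4) (r : ℚ)
    (h : r ^ 3 - 3 * (q : ℚ) ^ 2 * r - 2 * (1 - (q : ℚ) ^ 3) = 0) : False := by
  have hint : IsIntegral ℤ r := by
    apply aux_integral 0 (-(3 * q ^ 2)) (-(2 * (1 - q ^ 3)))
    push_cast
    linear_combination h
  obtain ⟨z, hz⟩ := IsIntegrallyClosed.isIntegral_iff.1 hint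
  rw [eq_intCast] at hz
  rw [← hz] at h
  exact aux_no_int_root q hq z (by exact_mod_cast h)

open Polynomial in
theorem aux_poly {F : Type*} [Field F] (a b : F) :
    (X ^ 3 - C a * X - C b : F[X]).Monic ∧ (X ^ 3 - C a * X - C b : F[X]).natDegree = 3 := by
  constructor
  · monicity!
  · compute_degree!

open Polynomial in
theorem aux_irred {F : Type*} [Field F] (a b : F) (h : ∀ r : F, r ^ 3 - a * r - b ≠ 0) :
    Irreducible (X ^ 3 - C a * X - C b : F[X]) := by
  obtain ⟨hm, hd⟩ := aux_poly a b
  rw [hm.irreducible_iff_roots_eq_zero_of_degree_le_three (by omega) (by omega)]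
  rw [Multiset.eq_zero_iff_forall_notMem]
  intro r hr
  rw [mem_roots hm.ne_zero, IsRoot.def] at hr
  apply h r
  simpa using hr

open Polynomial in
theorem aux_no_root {K : Type*} [Field K] [NumberField K] (hK : Module.finrank ℚ K = 2)
    (q : ℤ) (hq : q % 15 = 4) (t : K)
    (h : t ^ 3 - 3 * (q : K) ^ 2 * t - 2 * (1 - (q : K) ^ 3) = 0) : False := by
  have hirr := aux_irred (3 * (q : ℚ) ^ 2) (2 * (1 - (q : ℚ) ^ 3)) (fun r hr => aux_no_rat_root q hq r hr)
  obtain ⟨hm, hd⟩ := aux_poly (3 * (q : ℚ) ^ 2) (2 * (1 - (q : ℚ) ^ 3))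
  have hmin := minpoly.eq_of_irreducible_of_monic hirr (x := t) (by
    simp only [map_sub, map_mul, map_pow, aeval_X, aeval_C]
    simpa using h) hm
  have hdvd := minpoly.degree_dvd (K := ℚ) (x := t) (Algebra.IsIntegral.isIntegral t)
  rw [← hmin, hd, hK] at hdvd
  omega

theorem aux_gen {K : Type*} [Field K] [NumberField K] (hK : Module.finrank ℚ K = 2)
    (q : ℤ) (hqodd : Odd q) (α : K) (hα : α ^ 2 = 3 * (2 * (q : K) ^ 3 - 1)) :
    IntermediateField.adjoin ℚ {α} = ⊤ := by
  have h1 := Module.finrank_mul_finrank ℚ (IntermediateField.adjoin ℚ {α}) K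
  rw [hK] at h1
  have hne : Module.finrank ℚ (IntermediateField.adjoin ℚ {α}) ≠ 1 := by
    rw [Ne, IntermediateField.finrank_adjoin_simple_eq_one_iff, IntermediateField.mem_bot]
    rintro ⟨r, rfl⟩
    apply aux_sqrt_irrat q hqodd r
    apply (algebraMap ℚ K).injective
    simpa using hα
  have h2 := (Nat.dvd_prime Nat.prime_two).1 (Dvd.intro _ h1)
  have h3 := h2.resolve_left hne
  apply IntermediateField.eq_of_le_of_finrank_eq' le_top
  rw [h3] at h1
  rw [IntermediateField.finrank_top]
  omega

theorem aux_conj_sq (z : ℂ) (r : ℝ) (hr : 0 < r) (h : z ^ 2 = r) : (starRingEnd ℂ) z = z := by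
  rw [Complex.conj_eq_iff_im]
  have h1 := congrArg Complex.re h
  have h2 := congrArg Complex.im h
  simp [pow_two] at h1 h2
  by_contra h3
  have h4 : z.re = 0 := by
    have : z.im * z.re = 0 := by linarith
    exact (mul_eq_zero.1 this).resolve_left h3
  rw [h4] at h1
  nlinarith [sq_nonneg z.im]

theorem aux_conj_cubic (z : ℂ) (q : ℝ) (hq : 1 < 2 * q ^ 3)
    (h : z ^ 3 - 3 * (q : ℂ) ^ 2 * z - 2 * (1 - (q : ℂ) ^ 3) = 0) : (starRingEnd ℂ) z = z := by
  rw [Complex.conj_eq_iff_im]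
  obtain ⟨x, y⟩ := z
  have h1 := congrArg Complex.re h
  have h2 := congrArg Complex.im h
  simp [pow_succ] at h1 h2
  change y = 0
  by_contra h3
  have hy : y ^ 2 = 3 * x ^ 2 - 3 * q ^ 2 := by
    have : y * (y ^ 2 - (3 * x ^ 2 - 3 * q ^ 2)) = 0 := by linear_combination -h2
    have := (mul_eq_zero.1 this).resolve_left h3
    linarith
  have hy0 : 0 < y ^ 2 := by positivity
  have hB : 2 * (1 - q ^ 3) = -8 * x ^ 3 + 6 * q ^ 2 * x := by
    linear_combination -h1 - 3 * x * hy
  have key : 4 * (q ^ 2) ^ 3 - (2 * (1 - q ^ 3)) ^ 2 = -4 * (x ^ 2 - q ^ 2) * (4 * x ^ 2 - q ^ 2) ^ 2 := by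
    rw [hB]; ring
  have h5 : 4 * (q ^ 2) ^ 3 - (2 * (1 - q ^ 3)) ^ 2 = 4 * (2 * q ^ 3 - 1) := by ring
  have h6 : 0 ≤ (x ^ 2 - q ^ 2) * (4 * x ^ 2 - q ^ 2) ^ 2 := by
    apply mul_nonneg
    · linarith
    · positivity
  linarith

theorem aux_unram {S : Type*} [CommRing S] [IsDomain S] [CharZero S] (τ : S →+* S) (q j : ℤ)
    (hqodd : Odd q) (hq3 : q = 1 + 3 * j) (t y : S)
    (h1 : t + τ t + τ (τ t) = 0) (h2 : t * τ t + t * τ (τ t) + τ t * τ (τ t) = -(3 * (q : S) ^ 2))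
    (h3 : t * τ t * τ (τ t) = 2 * (1 - (q : S) ^ 3)) (hy : 3 * y = t ^ 2) :
    Ideal.span (Set.range fun y : S => y - τ y) = ⊤ := by
  set J := Ideal.span (Set.range fun y : S => y - τ y) with hJ
  have hmk : ∀ z, Ideal.Quotient.mk J (τ z) = Ideal.Quotient.mk J z := by
    intro z
    rw [eq_comm, Ideal.Quotient.eq]
    exact Ideal.subset_span ⟨z, rfl⟩
  have hy1 : 3 * τ y = (τ t) ^ 2 := by rw [← map_pow, ← hy, map_mul, map_ofNat]
  have hy2 : 3 * τ (τ y) = (τ (τ t)) ^ 2 := by rw [← map_pow, ← map_pow, ← hy, map_mul, map_mul, map_ofNat, map_ofNat]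
  have hysum : y + τ y + τ (τ y) = 2 * (q : S) ^ 2 := by
    have : (3 : S) * (y + τ y + τ (τ y)) = 3 * (2 * (q : S) ^ 2) := by
      linear_combination hy + hy1 + hy2 + (t + τ t + τ (τ t)) * h1 - 2 * h2
    exact mul_left_cancel₀ (by exact_mod_cast (by norm_num : (3 : ℕ) ≠ 0)) this
  have g1 := congrArg (Ideal.Quotient.mk J) h1
  have g2 := congrArg (Ideal.Quotient.mk J) h2
  have g3 := congrArg (Ideal.Quotient.mk J) h3
  have g4 := congrArg (Ideal.Quotient.mk J) hysum
  simp only [map_add, map_mul, hmk, map_zero, map_neg, map_sub, map_pow, map_one, map_ofNat, map_intCast] at g1 g2 g3 g4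
  rw [Ideal.eq_top_iff_one, ← Ideal.Quotient.eq_zero_iff_mem, map_one]
  generalize Ideal.Quotient.mk J t = T at *
  generalize Ideal.Quotient.mk J y = Y at *
  have e1 : 3 * (q : S ⧸ J) ^ 2 = 0 := by linear_combination g2 - T * g1
  have e2 : (6 : S ⧸ J) = 0 := by
    linear_combination T ^ 2 * g1 - 3 * g3 + 2 * (q : S ⧸ J) * e1
  obtain ⟨k, hk⟩ := hqodd
  have hk' : (q : S ⧸ J) = 2 * k + 1 := by rw [hk]; push_cast; ring
  have e3 : (3 : S ⧸ J) = 0 := by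
    have := e1
    rw [hk'] at this
    linear_combination this - (2 * k ^ 2 + 2 * k) * e2
  have hj' : (q : S ⧸ J) = 1 + 3 * j := by rw [hq3]; push_cast; ring
  have e4 : (2 : S ⧸ J) = 0 := by
    rw [hj'] at g4
    linear_combination Y * e3 - g4 - (4 * j + 6 * j ^ 2) * e3
  linear_combination e3 - e4

open Polynomial in
theorem aux_exists.{u} {K : Type u} [Field K] (a b : K) (h : ∀ r : K, r ^ 3 - a * r - b ≠ 0) :
    ∃ (L : Type u) (_ : Field L) (_ : Algebra K L) (θ : L), Module.finrank K L = 3 ∧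
      θ ^ 3 - algebraMap K L a * θ - algebraMap K L b = 0 ∧
      (∀ θ₂ : L, θ₂ ^ 3 - algebraMap K L a * θ₂ - algebraMap K L b = 0 →
        ∃ s : L →ₐ[K] L, s θ = θ₂) ∧
      (∀ φ ψ : L →+* ℂ, φ.comp (algebraMap K L) = ψ.comp (algebraMap K L) → φ θ = ψ θ → φ = ψ) ∧
      (∀ φ ψ : L →ₐ[K] L, φ θ = ψ θ → φ = ψ) := by
  let g : K[X] := X ^ 3 - C a * X - C b
  have hirr : Irreducible g := aux_irred _ _ h
  obtain ⟨hmon, hdeg⟩ : g.Monic ∧ g.natDegree = 3 := aux_poly _ _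
  have : Fact (Irreducible g) := ⟨hirr⟩
  refine ⟨AdjoinRoot g, inferInstance, inferInstance, AdjoinRoot.root g, ?_, ?_, ?_, ?_, ?_⟩
  · rw [(AdjoinRoot.powerBasis hirr.ne_zero).finrank, AdjoinRoot.powerBasis_dim, hdeg]
  · have := AdjoinRoot.eval₂_root g
    simp only [g, eval₂_sub, eval₂_mul, eval₂_pow, eval₂_X, eval₂_C] at this
    exact this
  · intro θ₂ hθ₂
    refine ⟨AdjoinRoot.liftAlgHom g (Algebra.ofId K _) θ₂ ?_, ?_⟩
    · simp only [g, eval₂_sub, eval₂_mul, eval₂_pow, eval₂_X, eval₂_C]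
      exact hθ₂
    · simp
  · intro φ ψ h1 h2
    exact AdjoinRoot.ringHom_ext h1 h2
  · intro φ ψ h1
    exact AdjoinRoot.algHom_ext h1

set_option maxHeartbeats 1000000 in
theorem aux_main1 {K L : Type*} [Field K] [NumberField K] (hK : Module.finrank ℚ K = 2)
    [Field L] [NumberField L] [Algebra K L]
    (q : ℤ) (hq0 : 0 < q) (hqodd : Odd q) (hq : q % 15 = 4)
    (α : K) (hα : α ^ 2 = 3 * (2 * (q : K) ^ 3 - 1)) (θ : L) (hKL : Module.finrank K L = 3)
    (hθ : θ ^ 3 - 3 * (q : L) ^ 2 * θ - 2 * (1 - (q : L) ^ 3) = 0)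
    (hlift : ∀ θ₂ : L, θ₂ ^ 3 - 3 * (q : L) ^ 2 * θ₂ - 2 * (1 - (q : L) ^ 3) = 0 →
        ∃ s : L →ₐ[K] L, s θ = θ₂)
    (hext : ∀ φ ψ : L →+* ℂ, φ.comp (algebraMap K L) = ψ.comp (algebraMap K L) → φ θ = ψ θ → φ = ψ)
    (hext' : ∀ φ ψ : L →ₐ[K] L, φ θ = ψ θ → φ = ψ) :
    3 ∣ NumberField.classNumber K := by
  have hL : Module.finrank ℚ L = 6 := by
    rw [← Module.finrank_mul_finrank ℚ K L, hK, hKL]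
  let β : L := algebraMap K L α
  have hβ : β ^ 2 = 3 * (2 * (q : L) ^ 3 - 1) := by
    have := congrArg (algebraMap K L) hα
    simp only [map_pow, map_mul, map_sub, map_one, map_ofNat, map_intCast] at this
    exact this
  -- real embeddings
  have hq3 : (1 : ℤ) < 2 * q ^ 3 := by
    have : 1 ≤ q ^ 3 := one_le_pow₀ hq0
    omega
  have hLreal : IsTotallyReal L := by
    refine ⟨fun v => ?_⟩
    rw [InfinitePlace.isReal_iff]
    generalize v.embedding = φ
    have e2 : φ 2 = 2 := map_ofNat φ 2
    have e3 : φ 3 = 3 := map_ofNat φ 3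
    change ComplexEmbedding.conjugate φ = φ
    refine hext _ _ ?_ ?_
    · have h1 := aux_gen hK q hqodd α hα
      let φ₁ : K →ₐ[ℚ] ℂ := ((ComplexEmbedding.conjugate φ).comp (algebraMap K L)).toRatAlgHom
      let φ₂ : K →ₐ[ℚ] ℂ := (φ.comp (algebraMap K L)).toRatAlgHom
      have h2 : φ₁ = φ₂ := by
        have key : φ₁ α = φ₂ α := by
          change (starRingEnd ℂ) (φ β) = φ β
          apply aux_conj_sq _ (3 * (2 * (q : ℝ) ^ 3 - 1))
          · have : (1 : ℝ) < 2 * (q : ℝ) ^ 3 := by exact_mod_cast hq3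
            linarith
          · rw [← map_pow, hβ]
            simp [e2, e3]
        ext x
        have hx : x ∈ IntermediateField.adjoin ℚ {α} := by rw [h1]; trivial
        induction hx using IntermediateField.adjoin_induction with
        | mem x hx => rw [Set.mem_singleton_iff] at hx; rw [hx, key]
        | algebraMap x => rw [φ₁.commutes, φ₂.commutes]
        | add x y _ _ h h' => rw [map_add, map_add, h, h']
        | inv x _ h => rw [map_inv₀, map_inv₀, h]
        | mul x y _ _ h h' => rw [map_mul, map_mul, h, h']
      exact congrArg (fun f : K →ₐ[ℚ] ℂ => (f : K →+* ℂ)) h2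
    · change (starRingEnd ℂ) (φ θ) = φ θ
      apply aux_conj_cubic _ (q : ℝ)
      · exact_mod_cast hq3
      · have := congrArg φ hθ
        simpa [e2, e3] using this
  have hKreal : IsTotallyReal K := IsTotallyReal.of_algebra (F := K) (K := L)
  -- the automorphism
  have hD : θ ^ 2 - (q : L) ^ 2 ≠ 0 := by
    intro h
    have h' : (θ - q) * (θ + q) = 0 := by linear_combination h
    rcases mul_eq_zero.1 h' with h | h
    · have : θ = q := by linear_combination h
      rw [this] at hθ
      have : (2 : L) = 0 := by linear_combination -hθ
      exact two_ne_zero this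
    · have : θ = -q := by linear_combination h
      rw [this] at hθ
      have : 2 * q ^ 3 - 1 = (0 : ℤ) := by
        have : ((2 * q ^ 3 - 1 : ℤ) : L) = 0 := by
          push_cast
          linear_combination hθ / 2
        exact_mod_cast this
      omega
  let w : L := (θ ^ 2 - (q : L) ^ 2)⁻¹
  have hw : w * (θ ^ 2 - (q : L) ^ 2) = 1 := inv_mul_cancel₀ hD
  let θ₂ : L := -θ / 2 + β * w
  have hquad : θ₂ ^ 2 + θ * θ₂ + θ ^ 2 - 3 * (q : L) ^ 2 = 0 := by
    have h1 : 4 * β ^ 2 = (12 * (q : L) ^ 2 - 3 * θ ^ 2) * (θ ^ 2 - (q : L) ^ 2) ^ 2 := by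
      rw [hβ]
      linear_combination (3 * θ ^ 3 - 9 * (q : L) ^ 2 * θ + 6 * (1 - (q : L) ^ 3)) * hθ
    have h2 : 4 * (β * w) ^ 2 = 12 * (q : L) ^ 2 - 3 * θ ^ 2 := by
      calc 4 * (β * w) ^ 2 = (4 * β ^ 2) * w ^ 2 := by ring
        _ = (12 * (q : L) ^ 2 - 3 * θ ^ 2) * (w * (θ ^ 2 - (q : L) ^ 2)) ^ 2 := by rw [h1]; ring
        _ = _ := by rw [hw]; ring
    simp only [θ₂]
    linear_combination h2 / 4
  have hθ₂ : θ₂ ^ 3 - 3 * (q : L) ^ 2 * θ₂ - 2 * (1 - (q : L) ^ 3) = 0 := by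
    linear_combination hθ + (θ₂ - θ) * hquad
  obtain ⟨s, hsθ⟩ := hlift θ₂ hθ₂
  have hsβ : s β = β := s.commutes α
  have hsq : s (q : L) = q := map_intCast s q
  have hsθ₂ : s θ₂ = -θ - θ₂ := by
    have h1 : s θ₂ = -θ₂ / 2 + β * s w := by
      have : s θ₂ = s (-θ / 2 + β * w) := rfl
      rw [this]
      simp only [map_add, map_mul, map_div₀, map_neg, hsθ, hsβ, map_ofNat]
    have h2 : s w * (θ₂ ^ 2 - (q : L) ^ 2) = 1 := by
      have := congrArg s hw
      simpa [hsθ, hsq] using this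
    have hne : θ₂ ^ 2 - (q : L) ^ 2 ≠ 0 := right_ne_zero_of_mul_eq_one h2
    apply mul_right_cancel₀ hne
    rw [h1]
    have hβ' : β = (θ₂ + θ / 2) * (θ ^ 2 - (q : L) ^ 2) := by
      have : θ₂ + θ / 2 = β * w := by simp only [θ₂]; ring
      rw [this, mul_assoc, hw, mul_one]
    have : (-θ₂ / 2 + β * s w) * (θ₂ ^ 2 - (q : L) ^ 2) = -θ₂ / 2 * (θ₂ ^ 2 - (q : L) ^ 2) + β := by
      linear_combination β * h2
    rw [this, hβ']
    have e : (q : L) ^ 2 = (θ₂ ^ 2 + θ * θ₂ + θ ^ 2) / 3 := by linear_combination -hquad / 3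
    rw [e]
    ring
  have hs3 : ∀ x, s (s (s x)) = x := by
    have : (s.comp (s.comp s)) = AlgHom.id K L := by
      apply hext'
      change s (s (s θ)) = θ
      rw [hsθ, hsθ₂, map_sub, map_neg, hsθ, hsθ₂]
      ring
    intro x
    exact congrArg (fun f : L →ₐ[K] L => f x) this
  let e : L ≃ₐ[K] L := AlgEquiv.ofAlgHom s (s.comp s) (AlgHom.ext hs3) (AlgHom.ext hs3)
  have hsne : s θ ≠ θ := by
    rw [hsθ]
    intro h
    rw [h] at hquad
    apply hD
    linear_combination hquad / 3
  have hord : orderOf e = 3 := by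
    apply orderOf_eq_prime
    · ext x
      exact hs3 x
    · intro h
      apply hsne
      exact congrArg (fun f : L ≃ₐ[K] L => f θ) h
  have hfixK : ∀ x, s x = x → ∃ r : K, algebraMap K L r = x := by
    intro x hx
    let H := Subgroup.zpowers e
    have h1 := IntermediateField.finrank_fixedField_eq_card H
    rw [Nat.card_zpowers, hord] at h1
    have h2 := Module.finrank_mul_finrank K (IntermediateField.fixedField H) L
    rw [h1, hKL] at h2
    have h3 : Module.finrank K (IntermediateField.fixedField H) = 1 := by omega
    rw [IntermediateField.finrank_eq_one_iff] at h3
    have hxm : x ∈ IntermediateField.fixedField H := by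
      rw [IntermediateField.mem_fixedField_iff]
      intro f hf
      obtain ⟨k, rfl⟩ := Subgroup.mem_zpowers_iff.1 hf
      have : e ∈ MulAction.stabilizer (L ≃ₐ[K] L) x := hx
      exact zpow_mem this k
    rw [h3, IntermediateField.mem_bot] at hxm
    exact hxm
  -- restrict to integers
  let τ : 𝓞 L ≃ₐ[𝓞 K] 𝓞 L := galRestrict (𝓞 K) K L (𝓞 L) e
  have hτ : ∀ x : 𝓞 L, ((τ x : 𝓞 L) : L) = s (x : L) := fun x =>
    algebraMap_galRestrict_apply (𝓞 K) e x
  have hinj : ∀ x y : 𝓞 L, (x : L) = (y : L) → x = y := fun x y h => RingOfIntegers.ext h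
  have hθint : IsIntegral ℤ θ := by
    apply aux_integral 0 (-(3 * q ^ 2)) (-(2 * (1 - q ^ 3)))
    push_cast
    linear_combination hθ
  obtain ⟨j, hj⟩ : ∃ j, q = 1 + 3 * j := ⟨q / 3, by omega⟩
  have hyint : IsIntegral ℤ (θ ^ 2 / 3) := by
    apply aux_integral (-(2 * q ^ 2)) (q ^ 4) (-(12 * (j + 3 * j ^ 2 + 3 * j ^ 3) ^ 2))
    have hB : 2 * (1 - (q : L) ^ 3) = -18 * (j + 3 * j ^ 2 + 3 * j ^ 3) := by
      rw [hj]; push_cast; ring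
    have h1 : (θ * (θ ^ 2 - 3 * (q : L) ^ 2)) ^ 2 = (-18 * (j + 3 * j ^ 2 + 3 * j ^ 3)) ^ 2 := by
      rw [← hB]
      congr 1
      linear_combination hθ
    push_cast
    linear_combination h1 / 27
  let t : 𝓞 L := ⟨θ, hθint⟩
  let y : 𝓞 L := ⟨θ ^ 2 / 3, hyint⟩
  have ht : (t : L) = θ := rfl
  have hy : (y : L) = θ ^ 2 / 3 := rfl
  have hq' : (algebraMap (𝓞 L) L) (q : 𝓞 L) = q := map_intCast _ q
  have hJ := aux_unram (τ : 𝓞 L →+* 𝓞 L) q j hqodd hj t y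
    (by
      apply hinj
      change ((t + τ t + τ (τ t) : 𝓞 L) : L) = _
      simp only [map_add, hτ, ht, hsθ, hsθ₂, map_zero]
      ring)
    (by
      apply hinj
      change ((t * τ t + t * τ (τ t) + τ t * τ (τ t) : 𝓞 L) : L) = _
      simp only [map_add, map_mul, map_neg, map_pow, hτ, ht, hsθ, hsθ₂, map_ofNat, hq']
      linear_combination -hquad)
    (by
      apply hinj
      change ((t * τ t * τ (τ t) : 𝓞 L) : L) = _
      simp only [map_sub, map_mul, map_one, map_pow, hτ, ht, hsθ, hsθ₂, map_ofNat, hq']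
      linear_combination hθ - θ * hquad)
    (by
      apply hinj
      simp only [map_mul, map_pow, ht, hy, map_ofNat]
      ring)
  refine auxC hK hL τ ?_ ?_ t ?_ hJ
  · intro x
    apply hinj
    rw [hτ, hτ, hτ, hs3]
  · intro x hx
    obtain ⟨r, hr⟩ := hfixK x (by rw [← hτ, hx])
    have hrint : IsIntegral ℤ r := by
      rw [← isIntegral_algebraMap_iff (algebraMap K L).injective, hr]
      exact x.2
    refine ⟨⟨r, hrint⟩, ?_⟩
    apply hinj
    exact hr
  · intro h
    apply hsne
    have := congrArg (fun z : 𝓞 L => (z : L)) h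
    simp only [hτ, ht] at this
    exact this

theorem aux_main {K : Type*} [Field K] [NumberField K] (hK : Module.finrank ℚ K = 2)
    (q : ℤ) (hq0 : 0 < q) (hqodd : Odd q) (hq : q % 15 = 4)
    (α : K) (hα : α ^ 2 = 3 * (2 * (q : K) ^ 3 - 1)) : 3 ∣ NumberField.classNumber K := by
  obtain ⟨L, _, _, θ, hKL, hθ, hlift, hext, hext'⟩ := aux_exists (3 * (q : K) ^ 2)
    (2 * (1 - (q : K) ^ 3)) (fun r hr => aux_no_root hK q hq r hr)
  simp only [map_mul, map_sub, map_pow, map_one, map_ofNat, map_intCast] at hθ hlift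
  have : FiniteDimensional K L := Module.finite_of_finrank_eq_succ hKL
  have : CharZero L := charZero_of_injective_algebraMap (algebraMap K L).injective
  have : FiniteDimensional ℚ L := FiniteDimensional.trans ℚ K L
  have : NumberField L := ⟨⟩
  exact aux_main1 hK q hq0 hqodd hq α hα θ hKL hθ hlift hext hext'

end

/-- Let `m` be an odd positive integer with `m ≡ 4 (mod 15)` and let `n ≥ 3` be an odd
integer.  Then `3` divides the class number of the real quadratic field
`ℚ(√(3 * (2 * m ^ (3 * n) - 1)))`. -/
theorem class_number_div_three_of_sqrt_three_mul_two_pow_sub_one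
    (m : ℤ) (hm : 0 < m) (hmodd : Odd m) (hm15 : m ≡ 4 [ZMOD 15])
    (n : ℕ) (hn : 3 ≤ n) (hnodd : Odd n)
    (K : Type*) [Field K] [NumberField K] (hdeg : Module.finrank ℚ K = 2)
    (hsqrt : ∃ α : K, α ^ 2 = 3 * (2 * (m : K) ^ (3 * n) - 1)) :
    3 ∣ NumberField.classNumber K := by
  obtain ⟨α, hα⟩ := hsqrt
  refine aux_main hdeg (m ^ n) (pow_pos hm n) hmodd.pow ?_ α ?_
  · obtain ⟨k, rfl⟩ := hnodd
    have h16 : m ^ 2 ≡ 1 [ZMOD 15] := (hm15.pow 2).trans (by decide)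
    have h1 : m ^ (2 * k + 1) ≡ 1 ^ k * 4 [ZMOD 15] := by
      rw [pow_succ, pow_mul]
      exact (h16.pow k).mul hm15
    rw [one_pow, one_mul] at h1
    exact h1
  · rw [hα]
    push_cast
    ring
end

section
/- Let m > 1 be an odd integer. Then 3 divides the class number of the imaginary quadratic field ℚ(√(1 − 2m³)). -/
open scoped nonZeroDivisors

lemma aux_sigma {K : Type*} [Field K] [NumberField K] (hdeg : Module.finrank ℚ K = 2)
    (N : ℤ) (hN : N < 0) (α : K) (hα : α ^ 2 = (N : K)) :
    ∃ σ : K ≃ₐ[ℚ] K, ∀ x : K, ∃ a b : ℚ, x = a + b * α ∧ σ x = a - b * α := by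
  have hnot : ∀ q : ℚ, (q : K) ≠ α := by
    intro q hq
    have h1 : ((q ^ 2 : ℚ) : K) = ((N : ℚ) : K) := by
      push_cast; rw [hq, hα]
    have h2 : q ^ 2 = (N : ℚ) := Rat.cast_injective h1
    have h3 : (N : ℚ) < 0 := by exact_mod_cast hN
    nlinarith [sq_nonneg q]
  haveI : Algebra.IsQuadraticExtension ℚ K := ⟨hdeg⟩
  have h1 : ¬ ∀ f : K ≃ₐ[ℚ] K, f α = α := by
    rw [← IsGalois.mem_range_algebraMap_iff_fixed]
    rintro ⟨q, hq⟩
    exact hnot q (by simpa using hq)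
  push Not at h1
  obtain ⟨σ, hσ⟩ := h1
  have hσ' : σ α = -α := by
    have : σ α ^ 2 = α ^ 2 := by
      rw [← map_pow, hα]; simp
    rcases sq_eq_sq_iff_eq_or_eq_neg.1 this with h | h
    · exact absurd h hσ
    · exact h
  refine ⟨σ, fun x => ?_⟩
  have hli : LinearIndependent ℚ ![(1 : K), α] := by
    rw [LinearIndependent.pair_iff]
    intro s t h
    have h' : (s : K) + t * α = 0 := by simpa [Algebra.smul_def] using h
    by_cases ht : t = 0
    · subst ht
      refine ⟨?_, rfl⟩
      simpa using h'
    · exfalso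
      apply hnot (-s / t)
      have : (t : K) ≠ 0 := by exact_mod_cast ht
      push_cast
      field_simp
      linear_combination -h'
  have hsp := hli.span_eq_top_of_card_eq_finrank (by simp [hdeg])
  have hx : x ∈ Submodule.span ℚ (Set.range ![(1 : K), α]) := by rw [hsp]; trivial
  rw [Matrix.range_cons_cons_empty, Submodule.mem_span_pair] at hx
  obtain ⟨a, b, rfl⟩ := hx
  refine ⟨a, b, by simp [Algebra.smul_def], ?_⟩
  simp [Algebra.smul_def, hσ', sub_eq_add_neg]

lemma aux_int {K : Type*} [Field K] [NumberField K] (q : ℚ) (h : IsIntegral ℤ (q : K)) :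
    ∃ n : ℤ, q = n := by
  have h1 : IsIntegral ℤ (algebraMap ℚ K q) := by simpa using h
  rw [isIntegral_algebraMap_iff (algebraMap ℚ K).injective] at h1
  obtain ⟨n, hn⟩ := IsIntegrallyClosed.isIntegral_iff.1 h1
  exact ⟨n, by simpa using hn.symm⟩

lemma aux_tn {K : Type*} [Field K] [NumberField K] 
    (N : ℤ) (α : K) (hα : α ^ 2 = (N : K)) (σ : K ≃ₐ[ℚ] K)
    (hσ : ∀ x : K, ∃ a b : ℚ, x = a + b * α ∧ σ x = a - b * α) (x : K) (hx : IsIntegral ℤ x) :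
    ∃ (t n : ℤ) (b : ℚ), x + σ x = t ∧ x * σ x = n ∧ (t : ℚ) ^ 2 - 4 * n = 4 * N * b ^ 2 ∧
      x = ((t / 2 : ℚ) : K) + b * α := by
  obtain ⟨a, b, h1, h2⟩ := hσ x
  have hx' : IsIntegral ℤ (σ x) := hx.map (σ.toAlgHom.restrictScalars ℤ)
  obtain ⟨t, ht⟩ := aux_int (K := K) (2 * a) (by
    have : ((2 * a : ℚ) : K) = x + σ x := by rw [h2]; nth_rw 1 [h1]; push_cast; ring
    rw [this]; exact hx.add hx')
  have e : ((a ^ 2 - N * b ^ 2 : ℚ) : K) = x * σ x := by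
    rw [h2]; nth_rw 1 [h1]; push_cast; rw [← hα]; ring
  obtain ⟨n, hn⟩ := aux_int (K := K) (a ^ 2 - N * b ^ 2) (by rw [e]; exact hx.mul hx')
  refine ⟨t, n, b, ?_, ?_, ?_, ?_⟩
  · have : ((t : ℚ) : K) = ((2 * a : ℚ) : K) := by rw [ht]
    push_cast at this
    rw [this, h2]; nth_rw 1 [h1]; ring
  · rw [← e, hn]; simp
  · rw [← ht, ← hn]; ring
  · rw [← ht]; simpa using h1

lemma aux_three (N : ℤ) (hN : N % 4 = 3) (r : ℚ) (h : (N : ℚ) * r ^ 2 = -3) : False := by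
  have hd : (r.den : ℚ) ≠ 0 := by exact_mod_cast r.den_ne_zero
  have h1 : N * r.num ^ 2 = -3 * (r.den : ℤ) ^ 2 := by
    rw [← Rat.num_div_den r] at h
    field_simp at h
    have h' : (N : ℚ) * r.num ^ 2 = -3 * (r.den : ℚ) ^ 2 := by linarith
    exact_mod_cast h'
  have hc : Int.gcd r.num r.den = 1 := by
    simpa [Int.gcd] using r.reduced
  generalize r.num = p at *
  generalize (r.den : ℤ) = q at *
  obtain ⟨k, hk⟩ : ∃ k, N = 4 * k + 3 := ⟨N / 4, by omega⟩
  subst hk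
  have key : Even p ∧ Even q := by
    rcases Int.even_or_odd' p with ⟨u, rfl | rfl⟩ <;> rcases Int.even_or_odd' q with ⟨v, rfl | rfl⟩
    · exact ⟨by simp, by simp⟩
    all_goals
      exfalso
      ring_nf at h1
      omega
  have := Int.dvd_coe_gcd key.1.two_dvd key.2.two_dvd
  rw [hc] at this
  omega

theorem aux_mr {t m : ℤ} (hm : 1 < m) (h : t ^ 3 - 3 * m ^ 2 * t = 2 * (1 - m ^ 3)) : False := by
  have h1 : (t + 2 * m) * (t - m) ^ 2 = 2 := by linear_combination h
  have h2 : (t - m) ^ 2 ∣ 2 := ⟨t + 2 * m, by linarith⟩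
  have h3 : (t - m) ^ 2 ≤ 2 := Int.le_of_dvd (by norm_num) h2
  have h4 : t - m ≤ 1 := by nlinarith
  have h5 : -1 ≤ t - m := by nlinarith
  obtain ⟨s, hs⟩ : ∃ s, s = t - m := ⟨_, rfl⟩
  have ht : t = s + m := by omega
  subst ht
  have : s = -1 ∨ s = 0 ∨ s = 1 := by omega
  rcases this with rfl | rfl | rfl <;> ring_nf at h1 <;> omega

/-- Let `m > 1` be an odd integer.  Then `3` divides the class number of the imaginary
quadratic field `ℚ(√(1 - 2 * m ^ 3))`. -/
theorem class_number_div_three_of_sqrt_one_sub_two_cube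
    (m : ℤ) (hm : 1 < m) (hmodd : Odd m)
    (K : Type*) [Field K] [NumberField K] (hdeg : Module.finrank ℚ K = 2)
    (hsqrt : ∃ α : K, α ^ 2 = 1 - 2 * (m : K) ^ 3) :
    3 ∣ NumberField.classNumber K := by
  obtain ⟨α, hα0⟩ := hsqrt
  obtain ⟨N, hNdef⟩ : ∃ N : ℤ, N = 1 - 2 * m ^ 3 := ⟨_, rfl⟩
  have hα : α ^ 2 = (N : K) := by rw [hα0, hNdef]; push_cast; ring
  have hm3 : 1 < m ^ 3 := one_lt_pow₀ hm (by norm_num)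
  have hNneg : N < 0 := by omega
  have hN4 : N % 4 = 3 := by
    have : Odd (m ^ 3) := hmodd.pow
    obtain ⟨k, hk⟩ := this
    omega
  have hNQ : (N : ℚ) < 0 := by exact_mod_cast hNneg
  obtain ⟨σ, hσ⟩ := aux_sigma hdeg N hNneg α hα
  have hσα : σ α = -α := by
    obtain ⟨a, b, h1, h2⟩ := hσ α
    have h3 : σ α ^ 2 = α ^ 2 := by rw [← map_pow, hα]; simp
    rcases sq_eq_sq_iff_eq_or_eq_neg.1 h3 with h | h
    · exfalso
      have h4 : α = (a : K) := by
        have h5 : α + σ α = 2 * a := by rw [h2]; nth_rw 1 [h1]; ring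
        rw [h] at h5
        have : (2 : K) * α = 2 * a := by rw [← h5]; ring
        exact mul_left_cancel₀ two_ne_zero this
      have h6 : ((a ^ 2 : ℚ) : K) = ((N : ℚ) : K) := by
        push_cast; rw [← h4, hα]
      have h7 : a ^ 2 = (N : ℚ) := Rat.cast_injective h6
      nlinarith [sq_nonneg a]
    · exact h
  have hαint : IsIntegral ℤ α := by
    have : IsIntegral ℤ (α ^ 2) := by rw [hα]; exact isIntegral_algebraMap (x := N)
    exact this.of_pow (by norm_num)
  -- units are cubes
  have hunit : ∀ u : (NumberField.RingOfIntegers K)ˣ, ∃ v : NumberField.RingOfIntegers K,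
      (u : NumberField.RingOfIntegers K) = v ^ 3 := by
    intro u
    obtain ⟨t, n, b, h1, h2, h3, h4⟩ := aux_tn N α hα σ hσ (u : NumberField.RingOfIntegers K)
      (NumberField.RingOfIntegers.isIntegral_coe _)
    obtain ⟨t', n', b', h1', h2', h3', h4'⟩ := aux_tn N α hα σ hσ
      ((u⁻¹ : (NumberField.RingOfIntegers K)ˣ) : NumberField.RingOfIntegers K)
      (NumberField.RingOfIntegers.isIntegral_coe _)
    have huu : (((u : NumberField.RingOfIntegers K)) : K) *
        (((u⁻¹ : (NumberField.RingOfIntegers K)ˣ) : NumberField.RingOfIntegers K) : K) = 1 := by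
      rw [← map_mul, Units.mul_inv, map_one]
    have hnn : n * n' = 1 := by
      have : ((n * n' : ℤ) : K) = 1 := by
        push_cast
        rw [← h2, ← h2', mul_mul_mul_comm, huu, ← map_mul, huu]; simp
      exact_mod_cast this
    have hn0 : 0 ≤ n := by
      have : (0 : ℚ) ≤ n := by nlinarith [sq_nonneg (t : ℚ), mul_nonneg (neg_nonneg.2 hNQ.le) (sq_nonneg b)]
      exact_mod_cast this
    have hn1 : n = 1 := by
      rcases Int.eq_one_or_neg_one_of_mul_eq_one hnn with h | h <;> omega
    subst hn1
    have ht : t ^ 2 ≤ 4 := by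
      have : (t : ℚ) ^ 2 ≤ 4 := by
        push_cast at h3
        nlinarith [mul_nonneg (neg_nonneg.2 hNQ.le) (sq_nonneg b)]
      exact_mod_cast this
    have ht1 : t ≤ 2 := by nlinarith
    have ht2 : -2 ≤ t := by nlinarith
    have hb0 : (t : ℚ) ^ 2 = 4 → b = 0 := by
      intro h
      rw [h] at h3
      have : (N : ℚ) * b ^ 2 = 0 := by push_cast at h3; linarith
      rcases mul_eq_zero.1 this with h | h
      · exact absurd h hNQ.ne
      · simpa using h
    have hb3 : (t : ℚ) ^ 2 = 1 → False := by
      intro h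
      rw [h] at h3
      apply aux_three N hN4 (2 * b)
      push_cast at h3
      linarith
    have hts : t = -2 ∨ t = -1 ∨ t = 0 ∨ t = 1 ∨ t = 2 := by omega
    rcases hts with rfl | rfl | rfl | rfl | rfl
    · have := hb0 (by norm_num)
      subst this
      refine ⟨-1, ?_⟩
      apply NumberField.RingOfIntegers.ext
      rw [h4]; norm_num
    · exact (hb3 (by norm_num)).elim
    · refine ⟨-u, ?_⟩
      apply NumberField.RingOfIntegers.ext
      have h5 : σ ((u : NumberField.RingOfIntegers K) : K) =
        -((u : NumberField.RingOfIntegers K) : K) := by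
          push_cast at h1
          linear_combination h1
      rw [h5] at h2
      push_cast at h2 ⊢
      linear_combination (-((u : NumberField.RingOfIntegers K) : K)) * h2
    · exact (hb3 (by norm_num)).elim
    · have := hb0 (by norm_num)
      subst this
      refine ⟨1, ?_⟩
      apply NumberField.RingOfIntegers.ext
      rw [h4]; norm_num
  -- the element
  obtain ⟨A, hA⟩ : ∃ A : NumberField.RingOfIntegers K, (A : K) = α := ⟨⟨α, hαint⟩, rfl⟩
  have hAA : A ^ 2 = 1 - 2 * (m : NumberField.RingOfIntegers K) ^ 3 := by
    apply NumberField.RingOfIntegers.ext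
    rw [← hA] at hα0
    simp only [map_pow, map_sub, map_one, map_mul, map_ofNat, map_intCast]
    exact hα0
  obtain ⟨β, hβ⟩ : ∃ β : NumberField.RingOfIntegers K, β = 1 - (m : NumberField.RingOfIntegers K) ^ 3 + A :=
    ⟨_, rfl⟩
  obtain ⟨β', hβ'⟩ : ∃ β' : NumberField.RingOfIntegers K, β' = 1 - (m : NumberField.RingOfIntegers K) ^ 3 - A :=
    ⟨_, rfl⟩
  have hprod : β * β' = ((m : NumberField.RingOfIntegers K) ^ 2) ^ 3 := by
    rw [hβ, hβ']; linear_combination -hAA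
  have hcop : IsCoprime β β' := by
    have c1 : IsCoprime (m ^ 6) (2 * (1 - m ^ 3)) := by
      apply IsCoprime.pow_left
      apply IsCoprime.mul_right
      · obtain ⟨k, hk⟩ := hmodd
        exact ⟨1, -k, by rw [hk]; ring⟩
      · exact ⟨m ^ 2, 1, by ring⟩
    obtain ⟨x, y, hxy⟩ := c1
    have hxy' : (x : NumberField.RingOfIntegers K) * m ^ 6 + y * (2 * (1 - m ^ 3)) = 1 := by
      exact_mod_cast congrArg (Int.cast : ℤ → NumberField.RingOfIntegers K) hxy
    refine ⟨x * β' + y, y, ?_⟩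
    have hs : β + β' = 2 * (1 - (m : NumberField.RingOfIntegers K) ^ 3) := by rw [hβ, hβ']; ring
    linear_combination (x : NumberField.RingOfIntegers K) * hprod + y * hs + hxy'
  have hm0 : (m : NumberField.RingOfIntegers K) ≠ 0 := by
    have : m ≠ 0 := by omega
    exact_mod_cast this
  have hβ0 : β ≠ 0 := by
    intro h
    rw [h, zero_mul] at hprod
    exact pow_ne_zero 3 (pow_ne_zero 2 hm0) hprod.symm
  obtain ⟨J, hJ⟩ : ∃ J : Ideal (NumberField.RingOfIntegers K), Ideal.span {β} = J ^ 3 := by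
    apply exists_eq_pow_of_mul_eq_pow_of_coprime
      (b := Ideal.span {β'}) (c := Ideal.span {(m : NumberField.RingOfIntegers K) ^ 2})
    · exact (Ideal.isCoprime_span_singleton_iff _ _).2 hcop
    · rw [Ideal.span_singleton_mul_span_singleton, Ideal.span_singleton_pow, hprod]
  have hJ0 : J ≠ 0 := by
    rintro rfl
    rw [zero_pow (by norm_num)] at hJ
    exact hβ0 (Ideal.span_singleton_eq_bot.1 hJ)
  have hJn : J ∈ (Ideal (NumberField.RingOfIntegers K))⁰ := mem_nonZeroDivisors_of_ne_zero hJ0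
  haveI : Fact (Nat.Prime 3) := ⟨Nat.prime_three⟩
  have hord : orderOf (ClassGroup.mk0 ⟨J, hJn⟩) = 3 := by
    apply orderOf_eq_prime
    · rw [← map_pow]
      have : (⟨J, hJn⟩ : (Ideal (NumberField.RingOfIntegers K))⁰) ^ 3 = ⟨J ^ 3, pow_mem hJn 3⟩ := rfl
      rw [this, ClassGroup.mk0_eq_one_iff, ← hJ]
      exact ⟨β, rfl⟩
    · rw [Ne, ClassGroup.mk0_eq_one_iff]
      rintro ⟨γ, hγ⟩
      change J = Ideal.span {γ} at hγ
      rw [hγ, Ideal.span_singleton_pow, Ideal.span_singleton_eq_span_singleton] at hJ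
      obtain ⟨u, hu⟩ := hJ.symm
      obtain ⟨v, hv⟩ := hunit u
      rw [hv, ← mul_pow] at hu
      obtain ⟨t, n, b, h1, h2, h3, h4⟩ := aux_tn N α hα σ hσ
        ((γ * v : NumberField.RingOfIntegers K) : K) (NumberField.RingOfIntegers.isIntegral_coe _)
      have hδ : ((γ * v : NumberField.RingOfIntegers K) : K) ^ 3 = 1 - (m : K) ^ 3 + α := by
        rw [← map_pow, hu, hβ, ← hA]; push_cast; rfl
      generalize ((γ * v : NumberField.RingOfIntegers K) : K) = δ at *
      have hδ' : (σ δ) ^ 3 = 1 - (m : K) ^ 3 - α := by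
        rw [← map_pow, hδ]
        simp [hσα, sub_eq_add_neg]
      have hn : n ^ 3 = (m ^ 2) ^ 3 := by
        have : (n : K) ^ 3 = ((m : K) ^ 2) ^ 3 := by
          rw [← h2, mul_pow, hδ, hδ']
          linear_combination -hα0
        exact_mod_cast this
      have hn' : n = m ^ 2 := (Odd.strictMono_pow (by decide : Odd 3)).injective hn
      subst hn'
      apply aux_mr (t := t) hm
      have : (t : K) ^ 3 - 3 * (m : K) ^ 2 * t = 2 * (1 - (m : K) ^ 3) := by
        push_cast at h2
        rw [← h1, ← h2]
        linear_combination hδ + hδ'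
      exact_mod_cast this
  rw [← hord]
  exact orderOf_dvd_card
end

section
/- Let n > 1 be an odd integer, and let a and b be integers satisfying a ≡ 19 (mod 30) and b ≡ 6 (mod 15). Then the cubic polynomial X³ − 3aⁿX − 2bⁿ is irreducible over ℚ. -/
open Polynomial

/-- Let `n > 1` be an odd integer, and `a`, `b` integers with `a ≡ 19 (mod 30)` and
`b ≡ 6 (mod 15)`.  Then `X ^ 3 - 3 * a ^ n * X - 2 * b ^ n` is irreducible over `ℚ`. -/
theorem irreducible_kishi_cubic_of_mod_thirty_mod_fifteen
    (n : ℕ) (hn : 1 < n) (hnodd : Odd n)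
    (a b : ℤ) (ha : a ≡ 19 [ZMOD 30]) (hb : b ≡ 6 [ZMOD 15]) :
    Irreducible (X ^ 3 - C (3 * (a : ℚ) ^ n) * X - C (2 * (b : ℚ) ^ n)) := by
  have aux : ∀ x : ZMod 5, ¬ (x ^ 3 - -3 * x - 2 = 0) := by decide
  have : Fact (Nat.Prime 5) := ⟨by norm_num⟩
  have ha5 : (a : ZMod 5) = -1 := by
    have h : a ≡ -1 [ZMOD (5 : ℕ)] := by
      simp only [Int.ModEq] at *; push_cast; omega
    simpa using (ZMod.intCast_eq_intCast_iff a (-1) 5).2 h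
  have hb5 : (b : ZMod 5) = 1 := by
    have h : b ≡ 1 [ZMOD (5 : ℕ)] := by
      simp only [Int.ModEq] at *; push_cast; omega
    simpa using (ZMod.intCast_eq_intCast_iff b 1 5).2 h
  have hm : (X ^ 3 - C (3 * a ^ n) * X - C (2 * b ^ n) : ℤ[X]).Monic := by monicity!
  have hmap : (X ^ 3 - C (3 * a ^ n) * X - C (2 * b ^ n) : ℤ[X]).map (Int.castRingHom (ZMod 5))
      = X ^ 3 - C (-3) * X - C 2 := by
    simp only [Polynomial.map_sub, Polynomial.map_mul, Polynomial.map_pow, map_X, map_C]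
    simp [ha5, hb5, hnodd.neg_one_pow]
  have hdeg : (X ^ 3 - C (-3) * X - C 2 : (ZMod 5)[X]).natDegree = 3 := by compute_degree!
  have h5 : Irreducible (X ^ 3 - C (-3) * X - C 2 : (ZMod 5)[X]) := by
    apply irreducible_of_degree_le_three_of_not_isRoot
    · rw [hdeg]; simp
    · intro x
      simp only [IsRoot.def, eval_sub, eval_mul, eval_pow, eval_X, eval_C]
      exact aux x
  have hZ := hm.irreducible_of_irreducible_map (Int.castRingHom (ZMod 5)) _ (hmap ▸ h5)
  have hQ := (IsPrimitive.Int.irreducible_iff_irreducible_map_cast hm.isPrimitive).1 hZ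
  simp only [Polynomial.map_sub, Polynomial.map_mul, Polynomial.map_pow, map_X, map_C] at hQ
  simpa using hQ
end

section
/- Let m be a positive integer with m ≡ 4 (mod 15) and let n be an odd positive integer. Then the cubic polynomial X³ − 6mⁿX − 4 is irreducible over ℚ. -/
open Polynomial

/-- Let `m` be a positive integer with `m ≡ 4 (mod 15)` and `n` an odd positive integer.
Then `X ^ 3 - 6 * m ^ n * X - 4` is irreducible over `ℚ`. -/
theorem irreducible_cubic_of_four_mod_fifteen
    (m : ℤ) (hm : 0 < m) (hm15 : m ≡ 4 [ZMOD 15]) (n : ℕ) (hn : 0 < n) (hnodd : Odd n) :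
    Irreducible (X ^ 3 - C (6 * (m : ℚ) ^ n) * X - C (4 : ℚ)) := by
  have hdeg : (X ^ 3 - C (6 * (m : ℚ) ^ n) * X - C (4 : ℚ)).natDegree = 3 := by
    compute_degree!
  have hm5 : (m : ZMod 5) = -1 := by
    have h : m ≡ -1 [ZMOD 5] := by
      unfold Int.ModEq at *
      omega
    have := (ZMod.intCast_eq_intCast_iff m (-1) 5).2 h
    simpa using this
  refine irreducible_of_degree_le_three_of_not_isRoot (by rw [hdeg]; decide) ?_
  intro r hr
  have hmonic : (X ^ 3 - C (6 * m ^ n) * X - C (4 : ℤ)).Monic := by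
    monicity!
  have hr' : aeval r (X ^ 3 - C (6 * m ^ n) * X - C (4 : ℤ)) = 0 := by
    have h : r ^ 3 - 6 * (m : ℚ) ^ n * r - 4 = 0 := by simpa [IsRoot] using hr
    rw [map_sub, map_sub, map_mul (aeval r), map_pow (aeval r), aeval_X, aeval_C, aeval_C,
      algebraMap_int_eq, eq_intCast, eq_intCast]
    push_cast
    exact h
  obtain ⟨k, hk, -⟩ := exists_integer_of_is_root_of_monic hmonic hr'
  have hk' : k ^ 3 - 6 * m ^ n * k - 4 = 0 := by
    have h : r ^ 3 - 6 * (m : ℚ) ^ n * r - 4 = 0 := by simpa [IsRoot] using hr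
    rw [hk] at h
    simp only [algebraMap_int_eq, eq_intCast] at h
    exact_mod_cast h
  have h5 := congrArg (Int.cast : ℤ → ZMod 5) hk'
  push_cast at h5
  rw [hm5, hnodd.neg_one_pow] at h5
  generalize (k : ZMod 5) = x at h5
  revert x
  decide
end

section
/- Let m > 1 be an odd integer and write 1 − 2m³ = t²d' where d' is the squarefree part of 1 − 2m³ and t is a positive integer. Then there is no element z of the ring ℤ[√d'] with z³ = 2 + 2t√d'; equivalently, there are no integers a and b satisfying both a³ + 3ab²d' = 2 and 3a²b + b³d' = 2t. -/
/-- Let `m > 1` be an odd integer and write `1 - 2 * m ^ 3 = t ^ 2 * d'` with `d'` the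
squarefree part of `1 - 2 * m ^ 3` and `t > 0`.  Then no element `z` of `ℤ[√d']` satisfies
`z ^ 3 = 2 + 2 * t * √d'`; equivalently, no integers `a`, `b` satisfy both
`a ^ 3 + 3 * a * b ^ 2 * d' = 2` and `3 * a ^ 2 * b + b ^ 3 * d' = 2 * t`. -/
theorem not_cube_two_add_two_mul_sqrtd
    (m : ℤ) (hm : 1 < m) (hmodd : Odd m)
    (d' t : ℤ) (hsf : Squarefree d') (ht : 0 < t) (hpart : 1 - 2 * m ^ 3 = t ^ 2 * d') :
    (¬ ∃ z : ℤ√d', z ^ 3 = 2 + 2 * (t : ℤ√d') * Zsqrtd.sqrtd) ∧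
      ¬ ∃ a b : ℤ, a ^ 3 + 3 * a * b ^ 2 * d' = 2 ∧ 3 * a ^ 2 * b + b ^ 3 * d' = 2 * t := by
  have key : ¬ ∃ a b : ℤ, a ^ 3 + 3 * a * b ^ 2 * d' = 2 ∧
      3 * a ^ 2 * b + b ^ 3 * d' = 2 * t := by
    rintro ⟨a, b, h1, h2⟩
    have h3 : (a ^ 2 - b ^ 2 * d') ^ 3 = (2 * m) ^ 3 := by
      have e : (a ^ 2 - b ^ 2 * d') ^ 3 =
          (a ^ 3 + 3 * a * b ^ 2 * d') ^ 2 - d' * (3 * a ^ 2 * b + b ^ 3 * d') ^ 2 := by ring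
      rw [e, h1, h2]
      linear_combination 4 * hpart
    have h4 : a ^ 2 - b ^ 2 * d' = 2 * m := (Odd.strictMono_pow (by decide : Odd 3)).injective h3
    have h5 : a * (2 * a ^ 2 - 3 * m) = 1 := by
      have : 2 * (a * (2 * a ^ 2 - 3 * m)) = 2 * 1 := by
        linear_combination h1 + 3 * a * h4
      linarith
    rcases Int.eq_one_or_neg_one_of_mul_eq_one h5 with rfl | rfl <;> omega
  refine ⟨?_, key⟩
  rintro ⟨⟨a, b⟩, hz⟩
  apply key
  have hre := congrArg Zsqrtd.re hz
  have him := congrArg Zsqrtd.im hz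
  simp [pow_succ] at hre him
  exact ⟨a, b, by linear_combination hre, by linear_combination him⟩
end

section
/- Let d ≠ 0, 1 be a squarefree integer, let K = ℚ(√d), and let α = (a + b√d)/2 be an element of the ring of integers O_K (with a, b ∈ ℤ) whose norm N_{K/ℚ}(α) equals c³ for some integer c. Then the cubic polynomial X³ − 3cX − a is reducible over ℚ if and only if α is a cube in K, i.e., if and only if there exists β ∈ K with β³ = α. -/
open Polynomial

theorem kishi_basis (d : ℤ) (hd1 : d ≠ 1) (hsf : Squarefree d)
    (K : Type*) [Field K] [NumberField K] (hdeg : Module.finrank ℚ K = 2)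
    (sqd : K) (hsqd : sqd ^ 2 = (d : K)) :
    ∃ B : Module.Basis (Fin 2) ℚ K, B 0 = 1 ∧ B 1 = sqd := by
  have hli : LinearIndependent ℚ ![(1 : K), sqd] := by
    rw [LinearIndependent.pair_iff]
    intro s t h
    have h' : (s : K) + (t : K) * sqd = 0 := by
      simpa [Algebra.smul_def] using h
    by_cases ht : t = 0
    · subst ht
      simp at h'
      exact ⟨h', rfl⟩
    · exfalso
      have htK : (t : K) ≠ 0 := by exact_mod_cast ht
      have h2 : ((s ^ 2 : ℚ) : K) = ((d * t ^ 2 : ℚ) : K) := by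
        push_cast
        rw [← hsqd]
        linear_combination ((s : K) - t * sqd) * h'
      have h3 : s ^ 2 = d * t ^ 2 := by exact_mod_cast h2
      have h4 : IsSquare ((d : ℤ) : ℚ) := ⟨s / t, by field_simp; linarith⟩
      rw [Rat.isSquare_intCast_iff] at h4
      obtain ⟨m, hm⟩ := h4
      have hu := hsf m ⟨1, by rw [hm]; ring⟩
      rcases Int.isUnit_iff.mp hu with h | h <;> subst h <;> simp at hm <;> exact hd1 hm
  refine ⟨basisOfLinearIndependentOfCardEqFinrank hli (by simp [hdeg]), ?_, ?_⟩ <;> simp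

theorem kishi_norm (d : ℤ) (K : Type*) [Field K] [NumberField K]
    (sqd : K) (hsqd : sqd ^ 2 = (d : K)) (B : Module.Basis (Fin 2) ℚ K)
    (h0 : B 0 = 1) (h1 : B 1 = sqd) (x y : ℚ) :
    Algebra.norm ℚ ((x : K) + y * sqd) = x ^ 2 - d * y ^ 2 := by
  have e0 : ((x : K) + y * sqd) * B 0 = x • B 0 + y • B 1 := by
    rw [h0, h1]; simp [Algebra.smul_def]
  have e1 : ((x : K) + y * sqd) * B 1 = (d * y : ℚ) • B 0 + x • B 1 := by
    rw [h0, h1]; simp [Algebra.smul_def]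
    linear_combination (y : K) * hsqd
  rw [Algebra.norm_eq_matrix_det B, Matrix.det_fin_two]
  simp only [Algebra.leftMulMatrix_eq_repr_mul, e0, e1]
  simp
  ring

theorem kishi_coord (K : Type*) [Field K] [NumberField K]
    (sqd : K) (B : Module.Basis (Fin 2) ℚ K)
    (h0 : B 0 = 1) (h1 : B 1 = sqd) (x y z w : ℚ)
    (h : (x : K) + y * sqd = z + w * sqd) : x = z ∧ y = w := by
  have h' : x • B 0 + y • B 1 = z • B 0 + w • B 1 := by
    rw [h0, h1]; simpa [Algebra.smul_def] using h
  have r := congrArg B.repr h'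
  have r0 := DFunLike.congr_fun r 0
  have r1 := DFunLike.congr_fun r 1
  simp at r0 r1
  exact ⟨r0, r1⟩

theorem kishi_irred (c a : ℚ) :
    ¬ Irreducible (X ^ 3 - C (3 * c) * X - C a) ↔ ∃ r : ℚ, r ^ 3 - 3 * c * r - a = 0 := by
  have hn : (X ^ 3 - C (3 * c) * X - C a).natDegree = 3 := by compute_degree!
  have hne : (X ^ 3 - C (3 * c) * X - C a) ≠ 0 := by
    intro h; rw [h] at hn; simp at hn
  rw [Polynomial.irreducible_iff_roots_eq_zero_of_degree_le_three (by omega) (by omega)]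
  rw [Multiset.eq_zero_iff_forall_notMem]
  push Not
  simp only [mem_roots hne, IsRoot.def]
  simp

/-- Kishi's lemma: let `d ≠ 0, 1` be squarefree, `K = ℚ(√d)`, and let
`α = (a + b√d)/2` be an algebraic integer of `K` whose norm is `c ^ 3`.  Then the Kishi
trinomial `X ^ 3 - 3c X - a` is reducible over `ℚ` if and only if `α` is a cube in `K`. -/
theorem kishi_trinomial_reducible_iff_cube
    (d : ℤ) (hd0 : d ≠ 0) (hd1 : d ≠ 1) (hsf : Squarefree d)
    (K : Type*) [Field K] [NumberField K] (hdeg : Module.finrank ℚ K = 2)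
    (sqd : K) (hsqd : sqd ^ 2 = (d : K))
    (a b : ℤ) (α : K) (hα : α = ((a : K) + (b : K) * sqd) / 2)
    (hint : IsIntegral ℤ α) (c : ℤ) (hnorm : Algebra.norm ℚ α = (c : ℚ) ^ 3) :
    ¬ Irreducible (X ^ 3 - C (3 * (c : ℚ)) * X - C (a : ℚ)) ↔ ∃ β : K, β ^ 3 = α := by
  obtain ⟨B, h0, h1⟩ := kishi_basis d hd1 hsf K hdeg sqd hsqd
  have hα' : α = ((a / 2 : ℚ) : K) + ((b / 2 : ℚ) : K) * sqd := by
    rw [hα]; push_cast; ring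
  rw [hα', kishi_norm d K sqd hsqd B h0 h1] at hnorm
  rw [kishi_irred]
  constructor
  · rintro ⟨r, hr⟩
    by_cases hb : b = 0
    · subst hb
      by_cases hc : c = 0
      · subst hc
        have ha : a = 0 := by simpa using hnorm
        subst ha
        exact ⟨0, by rw [hα]; simp⟩
      · have hcQ : (c : ℚ) ≠ 0 := by exact_mod_cast hc
        refine ⟨((a / 2 / c : ℚ) : K), ?_⟩
        have : (a / 2 / c : ℚ) ^ 3 = a / 2 := by
          rw [div_pow, ← hnorm]
          have ha : (a : ℚ) ≠ 0 := by
            intro ha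
            rw [ha] at hnorm
            apply hcQ
            have : (c : ℚ) ^ 3 = 0 := by rw [← hnorm]; simp
            simpa using this
          simp
          field_simp
        rw [hα', ← Rat.cast_pow, this]; simp
    · have hbQ : (b : ℚ) ≠ 0 := by exact_mod_cast hb
      have hdQ : (d : ℚ) ≠ 0 := by exact_mod_cast hd0
      have ha : (a : ℚ) = r ^ 3 - 3 * c * r := by linarith
      have key : (d : ℚ) * b ^ 2 = (r ^ 2 - c) ^ 2 * (r ^ 2 - 4 * c) := by
        rw [ha] at hnorm
        linear_combination -4 * hnorm
      have hrc : r ^ 2 - (c : ℚ) ≠ 0 := by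
        intro h
        rw [h] at key
        simp [hbQ, hdQ] at key
      set q : ℚ := b / (2 * (r ^ 2 - c)) with hq
      have hq1 : q * (r ^ 2 - c) = b / 2 := by rw [hq]; field_simp
      have hq2 : d * q ^ 2 = r ^ 2 / 4 - c := by
        rw [hq]; field_simp; linear_combination 4 * key
      have hq2K : (d : K) * (q : K) ^ 2 = (r : K) ^ 2 / 4 - c := by exact_mod_cast hq2
      have hq1K : (q : K) * ((r : K) ^ 2 - c) = b / 2 := by exact_mod_cast hq1
      have haK : (a : K) = (r : K) ^ 3 - 3 * c * r := by exact_mod_cast ha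
      refine ⟨(r : K) / 2 + q * sqd, ?_⟩
      rw [hα]
      linear_combination (3 * (r : K) / 2 * q ^ 2 + q ^ 3 * sqd) * hsqd
        + (3 * (r : K) / 2 + q * sqd) * hq2K + sqd * hq1K - haK / 2
  · rintro ⟨β, hβ⟩
    obtain ⟨x, y, rfl⟩ : ∃ x y : ℚ, β = (x : K) + y * sqd := by
      refine ⟨B.repr β 0, B.repr β 1, ?_⟩
      have := B.sum_repr β
      rw [Fin.sum_univ_two, h0, h1] at this
      simpa [Algebra.smul_def] using this.symm
    have hN : (x ^ 2 - d * y ^ 2) ^ 3 = (c : ℚ) ^ 3 := by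
      rw [← hnorm, ← kishi_norm d K sqd hsqd B h0 h1, ← map_pow, hβ, hα',
        kishi_norm d K sqd hsqd B h0 h1]
    have hN' : x ^ 2 - d * y ^ 2 = (c : ℚ) :=
      (Odd.strictMono_pow (by decide : Odd 3)).injective hN
    have hx := (kishi_coord K sqd B h0 h1 (x ^ 3 + 3 * x * d * y ^ 2)
      (3 * x ^ 2 * y + d * y ^ 3) (a / 2) (b / 2) (by
        rw [← hα', ← hβ]; push_cast
        linear_combination (-(3 * (x : K) * y ^ 2 + y ^ 3 * sqd)) * hsqd)).1
    exact ⟨2 * x, by linear_combination 2 * hx + 6 * x * hN'⟩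
end
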